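/- arXiv:1905.06813 — 4 statements merged into one kernel-verified Lean document; each statement's English description precedes it below -/
import Mathlib

section
/- Let n ≥ 2 be an integer and let R_n = ℤ[q_{i,j} : i,j ∈ {1,…,n}, i ≠ j] be the commutative polynomial ring in indeterminates q_{i,j}. Let M be the square matrix, with rows and columns indexed by the symmetric group S_n, whose (σ,τ) entry is v_n(σ,τ). Then det M = ∏_{I ⊆ {1,…,n}, |I| ≥ 2} (1 − ∏_{{i,j} ⊆ I, i < j} q_{i,j} q_{j,i})^{(|I|−2)!·(n−|I|+1)!}. -/
/-- The polynomial ring `ℤ[q_{i,j} : i,j ∈ {1,…,n}, i ≠ j]`. -/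
abbrev QRing (n : ℕ) : Type :=
  MvPolynomial {p : Fin n × Fin n // p.1 ≠ p.2} ℤ

/-- The variable `q_{i,j}` for `i ≠ j` (junk value `0` on the diagonal,
which is never used). -/
noncomputable def q {n : ℕ} (i j : Fin n) : QRing n :=
  if h : i ≠ j then MvPolynomial.X ⟨(i, j), h⟩ else 0

/-- The Aguiar–Mahajan pairing `v_n(σ,τ)`: the product of `q_{σ(i),σ(j)}` over
all pairs `i < j` with `τ⁻¹(σ(i)) > τ⁻¹(σ(j))`. -/
noncomputable def vn {n : ℕ} (σ τ : Equiv.Perm (Fin n)) : QRing n :=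
  ∏ p ∈ Finset.univ.filter
      (fun p : Fin n × Fin n => p.1 < p.2 ∧ τ⁻¹ (σ p.2) < τ⁻¹ (σ p.1)),
    q (σ p.1) (σ p.2)

open Finset


theorem det_weightedCycle {R : Type*} [CommRing R] {m : ℕ} (f : Fin (m + 1) → R) :
    Matrix.det (1 - Matrix.of fun i j : Fin (m + 1) => if j = i + 1 then f i else 0) =
      1 - ∏ i, f i := by
  rcases m with _ | m
  · simp [Matrix.det_unique]
  have h0 : ∀ i : Fin (m + 2), (1 - Matrix.of fun i j : Fin (m + 2) =>
      if j = i + 1 then f i else 0) i 0 =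
      if i = 0 then 1 else if i = Fin.last _ then - f (Fin.last _) else 0 := by
    intro i
    have : (0 = i + 1) ↔ i = Fin.last (m + 1) := by
      rw [eq_comm, ← Fin.last_add_one, add_left_inj]
    rcases eq_or_ne i 0 with rfl | hi
    · have : (0 : Fin (m + 2)) ≠ Fin.last (m + 1) := by simp [Fin.ext_iff]
      simp [Matrix.sub_apply]
    · simp only [Matrix.sub_apply, Matrix.one_apply, Matrix.of_apply, this, hi, if_false]
      split_ifs with h <;> simp [h]
  rw [Matrix.det_succ_column_zero]
  simp only [h0]
  rw [Fin.sum_univ_succ, Fin.sum_univ_castSucc, Finset.sum_eq_zero]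
  · rw [Matrix.det_of_isUpperTriangular, Matrix.det_of_isLowerTriangular]
    · have h1 : ∀ i : Fin (m + 1), (Fin.succ i : Fin (m+2)) ≠ i.succ + 1 := by
        intro i; simp
      have h2 : ∀ i : Fin (m + 1), (Fin.castSucc i : Fin (m+2)) ≠ i.succ := by
        intro i; simp [Fin.ext_iff]
      simp [Matrix.sub_apply, Fin.prod_univ_castSucc, h1, h2,
        Fin.succAbove_last, Finset.prod_neg]
      ring_nf
      simp [pow_mul']
    · intro i j hij
      have hij : i < j := hij
      simp [Matrix.sub_apply, Matrix.one_apply, Fin.succAbove_last, Fin.ext_iff] at hij ⊢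
      grind
    · intro i j hij
      have hij : j < i := hij
      have : ¬ (j.succ = i.succ + 1) := by
        intro h
        rcases Fin.eq_castSucc_or_eq_last i with ⟨i, rfl⟩ | rfl
        · rw [Fin.succ_castSucc, Fin.coeSucc_eq_succ] at h
          simp only [Fin.ext_iff, Fin.val_succ, Fin.lt_def, Fin.val_castSucc] at *
          omega
        · simp at h
      simp [Matrix.sub_apply, Matrix.one_apply, this]
      simp [Fin.ext_iff] at hij ⊢; omega
  · intro i _
    have : i.castSucc.succ ≠ Fin.last (m + 1) := by
      simp [Fin.ext_iff]; omega
    simp [this]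

section TranslationMatrix

variable {G R : Type*} [Group G] [DecidableEq G]

/-- The weighted matrix of right translation by `g`: row `x` has the single entry `f x`,
in column `x * g`. -/
def translationMatrix [Zero R] (g : G) (f : G → R) : Matrix G G R :=
  Matrix.of fun x y => if y = x * g then f x else 0

theorem translationMatrix_apply [Zero R] (g : G) (f : G → R) (x y : G) :
    translationMatrix g f x y = if y = x * g then f x else 0 := rfl

variable [Fintype G] [CommRing R]

theorem translationMatrix_mul (g h : G) (f f' : G → R) :
    translationMatrix g f * translationMatrix h f' =
      translationMatrix (g * h) fun x => f x * f' (x * g) := by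
  ext x y
  rw [Matrix.mul_apply, Finset.sum_eq_single (x * g)] <;>
    simp +contextual [translationMatrix_apply, mul_assoc]

omit [Fintype G] in
theorem translationMatrix_one : translationMatrix (1 : G) (fun _ => (1 : R)) = 1 := by
  ext x y
  simp [translationMatrix_apply, Matrix.one_apply, eq_comm]

theorem bijective_out_mul_pow (g : G) :
    Function.Bijective fun p : Fin (orderOf g) × (G ⧸ Subgroup.zpowers g) =>
      p.2.out * g ^ (p.1 : ℕ) := by
  constructor
  · rintro ⟨i, c⟩ ⟨j, d⟩ h
    have h' : c.out * g ^ (i : ℕ) = d.out * g ^ (j : ℕ) := h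
    have hcd : c = d := by
      have := congrArg (QuotientGroup.mk (s := Subgroup.zpowers g)) h'
      rwa [QuotientGroup.mk_mul_of_mem _ (Subgroup.npow_mem_zpowers g _),
        QuotientGroup.mk_mul_of_mem _ (Subgroup.npow_mem_zpowers g _),
        QuotientGroup.out_eq', QuotientGroup.out_eq'] at this
    subst hcd
    have := pow_injOn_Iio_orderOf i.2 j.2 (mul_left_cancel h')
    simp [Fin.ext this]
  · intro x
    obtain ⟨k, hk⟩ : (QuotientGroup.mk (s := Subgroup.zpowers g) x).out⁻¹ * x ∈
        Subgroup.zpowers g := by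
      rw [← QuotientGroup.eq, QuotientGroup.out_eq']
    obtain ⟨i, hi, hik⟩ : ∃ i < orderOf g, g ^ i = g ^ k := by
      have := mem_zpowers_iff_mem_range_orderOf.1 (⟨k, rfl⟩ : g ^ k ∈ Subgroup.zpowers g)
      simpa using this
    refine ⟨⟨⟨i, hi⟩, QuotientGroup.mk x⟩, ?_⟩
    simp only [hik]
    rw [show g ^ k = _ from hk, mul_inv_cancel_left]

theorem det_one_sub_translationMatrix (g : G) (f : G → R) :
    (1 - translationMatrix g f).det =
      ∏ c : G ⧸ Subgroup.zpowers g, (1 - ∏ i ∈ range (orderOf g), f (c.out * g ^ i)) := by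
  obtain ⟨m, hm⟩ : ∃ m, orderOf g = m + 1 := Nat.exists_eq_succ_of_ne_zero (orderOf_pos g).ne'
  have hbij := bijective_out_mul_pow g
  rw [hm] at hbij ⊢
  have hpow (i : Fin (m + 1)) : g ^ ((i + 1 : Fin (m + 1)) : ℕ) = g ^ (i : ℕ) * g := by
    rw [← pow_succ, pow_eq_pow_iff_modEq, hm, Fin.val_add]
    simp [Nat.ModEq]
  rw [← Matrix.det_submatrix_equiv_self (Equiv.ofBijective _ hbij)]
  have : (1 - translationMatrix g f).submatrix (Equiv.ofBijective _ hbij)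
      (Equiv.ofBijective _ hbij) = Matrix.blockDiagonal fun c : G ⧸ Subgroup.zpowers g =>
        1 - Matrix.of fun i j : Fin (m + 1) =>
          if j = i + 1 then f (c.out * g ^ (i : ℕ)) else 0 := by
    ext ⟨i, c⟩ ⟨j, d⟩
    have h1 := hbij.1.eq_iff (a := (i, c)) (b := (j, d))
    have h2 := hbij.1.eq_iff (a := (j, d)) (b := (i + 1, c))
    simp only [hpow, ← mul_assoc, Prod.mk.injEq] at h1 h2
    simp only [Matrix.submatrix_apply, Equiv.ofBijective_apply, Matrix.sub_apply,
      Matrix.one_apply, translationMatrix_apply, Matrix.blockDiagonal_apply, Matrix.of_apply,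
      h1, h2]
    by_cases hcd : c = d
    · subst hcd; simp
    · simp [hcd, Ne.symm hcd]
  rw [this, Matrix.det_blockDiagonal]
  simp_rw [det_weightedCycle, Finset.prod_range]

/-- If the product of the weights along each orbit of right translation by `g` is a function of an
invariant `J`, all of whose fibers over `s` have the same number of elements, then
`1 - translationMatrix g f` has the expected determinant. -/
theorem det_one_sub_translationMatrix_of_invariant {β : Type*} [DecidableEq β] (g : G) (f : G → R)
    (J : G → β) (hJ : ∀ x, J (x * g) = J x) (H : β → R)
    (hH : ∀ x, ∏ i ∈ range (orderOf g), f (x * g ^ i) = H (J x))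
    (s : Finset β) (hs : ∀ x, J x ∈ s) (N : ℕ)
    (hN : ∀ b ∈ s, #{x | J x = b} = N * orderOf g) :
    (1 - translationMatrix g f).det = ∏ b ∈ s, (1 - H b) ^ N := by
  have hJpow (x : G) (i : ℕ) : J (x * g ^ i) = J x := by
    induction i with
    | zero => simp
    | succ i ih => rw [pow_succ, ← mul_assoc, hJ, ih]
  rw [det_one_sub_translationMatrix]
  simp_rw [hH]
  rw [← Finset.prod_fiberwise_of_maps_to (t := s) (g := fun c : G ⧸ Subgroup.zpowers g => J c.out)
    fun c _ => hs _]
  refine Finset.prod_congr rfl fun b hb => ?_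
  rw [Finset.prod_congr rfl (g := fun _ => 1 - H b) (by simp +contextual), prod_const]
  congr 1
  have hcard : #{x | J x = b} =
      #((univ : Finset (Fin (orderOf g))) ×ˢ
        (univ.filter fun c : G ⧸ Subgroup.zpowers g => J c.out = b)) := by
    symm
    refine Finset.card_bij (fun p _ => p.2.out * g ^ (p.1 : ℕ)) ?_ ?_ ?_
    · simp [hJpow]
    · intro a _ b _ h
      exact (bijective_out_mul_pow g).1 h
    · intro x hx
      obtain ⟨p, rfl⟩ := (bijective_out_mul_pow g).2 x
      exact ⟨p, by simpa [hJpow] using hx, rfl⟩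
  rw [hN b hb, card_product, card_univ, Fintype.card_fin, mul_comm] at hcard
  exact (Nat.eq_of_mul_eq_mul_left (orderOf_pos g) hcard).symm

end TranslationMatrix

section BraidRelations

/-- The product `T (k + l - 1) * ⋯ * T (k + 1) * T k`. -/
def descProd {A : Type*} [Monoid A] (T : ℕ → A) (k : ℕ) : ℕ → A
  | 0 => 1
  | l + 1 => T (k + l) * descProd T k l

variable {A : Type*} [Ring A]

variable {T : ℕ → A} (hcomm : ∀ i j, i + 2 ≤ j → T i * T j = T j * T i)
  (hbraid : ∀ i, T i * T (i + 1) * T i = T (i + 1) * T i * T (i + 1))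

include hcomm in
theorem descProd_commute {k l i : ℕ} (h : k + l < i) :
    descProd T k l * T i = T i * descProd T k l := by
  induction l with
  | zero => simp [descProd]
  | succ l ih => rw [descProd, mul_assoc, ih (by omega), ← mul_assoc, hcomm _ _ (by omega),
      mul_assoc]

include hcomm hbraid in
theorem mul_descProd {k l i : ℕ} (hk : k ≤ i) (hi : i + 1 < k + l) :
    T i * descProd T k l = descProd T k l * T (i + 1) := by
  induction l with
  | zero => omega
  | succ l ih =>
    rw [descProd]
    rcases Nat.lt_or_ge (i + 1) (k + l) with h | h
    · rw [← mul_assoc, hcomm _ _ (by omega), mul_assoc, ih h, mul_assoc]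
    · obtain ⟨m, rfl⟩ : ∃ m, l = m + 1 := ⟨l - 1, by omega⟩
      obtain rfl : i = k + m := by omega
      rw [descProd, show k + (m + 1) = k + m + 1 by omega]
      simp only [← mul_assoc]
      rw [hbraid, mul_assoc, ← descProd_commute hcomm (by omega)]
      simp only [mul_assoc]

include hcomm hbraid in
theorem descProd_mul_descProd {k l j m : ℕ} (hk : k ≤ j) (hm : j + m ≤ k + l) :
    descProd T j m * descProd T k (l + 1) = descProd T k (l + 1) * descProd T (j + 1) m := by
  induction m with
  | zero => simp [descProd]
  | succ m ih =>
    rw [descProd, mul_assoc, ih (by omega), ← mul_assoc, mul_descProd hcomm hbraid (by omega)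
      (by omega), mul_assoc, show j + m + 1 = j + 1 + m by omega]
    rfl

/-- The sum of the products `T (k + l - 1) * ⋯ * T j` for `k ≤ j ≤ k + l`. -/
def descSum (T : ℕ → A) (k : ℕ) : ℕ → A
  | 0 => 1
  | l + 1 => descProd T k (l + 1) + descSum T (k + 1) l

include hcomm hbraid in
theorem descSum_sub_one_mul {k j l m : ℕ} (hk : k ≤ j) (hm : j + m = k + l + 1) :
    (descSum T j m - 1) * descProd T k (l + 1) =
      T (k + l) * descProd T k (l + 1) * (descSum T j m - descProd T j m) := by
  induction m generalizing j with
  | zero => simp [descSum, descProd]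
  | succ m ih =>
    have h := ih (j := j + 1) (by omega) (by omega)
    rw [descSum, add_sub_assoc, add_mul, h, descProd, show j + m = k + l by omega,
      mul_assoc (T (k + l)), descProd_mul_descProd hcomm hbraid hk (by omega)]
    noncomm_ring

include hcomm hbraid in
theorem descSum_mul_one_sub (k l : ℕ) :
    descSum T k (l + 1) * (1 - descProd T k (l + 1)) =
      (1 - T (k + l) * descProd T k (l + 1)) * descSum T (k + 1) l := by
  have h := descSum_sub_one_mul hcomm hbraid le_rfl (show k + (l + 1) = k + l + 1 by omega)
  have h2 : descSum T (k + 1) l = descSum T k (l + 1) - descProd T k (l + 1) := by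
    rw [descSum]; abel
  rw [h2, mul_sub, sub_mul 1, ← h]
  noncomm_ring

theorem descSum_eq_sum (T : ℕ → A) (k l : ℕ) :
    descSum T k l = ∑ j ∈ range (l + 1), descProd T (k + j) (l - j) := by
  induction l generalizing k with
  | zero => simp [descSum, descProd]
  | succ l ih =>
    rw [descSum, ih, sum_range_succ' _ (l + 1), add_comm]
    congr 1
    exact sum_congr rfl fun j _ => by rw [Nat.add_sub_add_right, add_assoc, add_comm 1 j]

end BraidRelations

theorem card_perm_image_eq {α : Type*} [Fintype α] [DecidableEq α] {s t : Finset α}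
    (h : #s = #t) :
    #{σ : Equiv.Perm α | s.image σ = t} = (#s).factorial * (Fintype.card α - #s).factorial := by
  obtain ⟨e⟩ : Nonempty (s ≃ t) := ⟨Finset.equivOfCardEq h⟩
  have hmem (σ : Equiv.Perm α) : s.image σ = t ↔ ∀ a, σ a ∈ t ↔ a ∈ s := by
    constructor
    · rintro rfl a; simp
    · intro hσ
      ext b
      obtain ⟨a, rfl⟩ := σ.surjective b
      simp [hσ]
  let σ₀ : Equiv.Perm α := e.extendSubtype
  have hσ₀ (a : α) : σ₀ a ∈ t ↔ a ∈ s := by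
    by_cases ha : a ∈ s
    · simpa [ha] using! e.extendSubtype_mem a ha
    · simpa [ha] using! e.extendSubtype_not_mem a ha
  have key := DomMulAct.stabilizer_card (fun a : α => decide (a ∈ s))
  rw [Fintype.prod_bool] at key
  have h1 : Fintype.card {a // decide (a ∈ s) = true} = #s := by simp
  have h2 : Fintype.card {a // decide (a ∈ s) = false} = Fintype.card α - #s := by
    simp [Fintype.card_subtype_compl]
  rw [h1, h2] at key
  rw [← key, Fintype.card_subtype]
  refine Finset.card_bij (fun σ _ => σ₀⁻¹ * σ) ?_ ?_ ?_
  · intro σ hσ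
    rw [mem_filter_univ, hmem] at hσ
    rw [mem_filter_univ]
    funext a
    have := hσ₀ (σ₀⁻¹ (σ a))
    simp only [Equiv.Perm.inv_def, Equiv.apply_symm_apply, hσ] at this
    simp [this]
  · intro σ _ τ _ h
    exact mul_left_cancel h
  · intro τ hτ
    refine ⟨σ₀ * τ, ?_, by simp⟩
    rw [mem_filter_univ] at hτ
    rw [mem_filter_univ, hmem]
    intro a
    simpa [hσ₀] using congrFun hτ a

theorem Equiv.Perm.IsCycleOn.orderOf_eq_card {α : Type*} {f : Equiv.Perm α} {s : Finset α}
    (hf : f.IsCycleOn s) (hs : s.Nonempty) (hfix : ∀ x ∉ s, f x = x) : orderOf f = #s := by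
  obtain ⟨a, ha⟩ := hs
  apply Nat.dvd_antisymm
  · rw [orderOf_dvd_iff_pow_eq_one]
    ext x
    by_cases hx : x ∈ s
    · exact hf.pow_card_apply hx
    · exact (Function.IsFixedPt.perm_pow (hfix x hx) _)
  · rw [← hf.pow_apply_eq ha, pow_orderOf_eq_one, Equiv.Perm.one_apply]

theorem Equiv.Perm.IsCycleOn.prod_range_pow_apply {α R : Type*} [CommMonoid R] {f : Equiv.Perm α}
    {s : Finset α} (hf : f.IsCycleOn s) {a : α} (ha : a ∈ s) (F : α → R) :
    ∏ i ∈ range #s, F ((f ^ i) a) = ∏ b ∈ s, F b := by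
  refine prod_bij (fun i _ => (f ^ i) a) ?_ ?_ ?_ ?_
  · intro i _
    exact hf.1.mapsTo.perm_pow i ha
  · intro i hi j hj h
    exact ((hf.pow_apply_eq_pow_apply ha).1 h).eq_of_lt_of_lt (mem_range.1 hi) (mem_range.1 hj)
  · intro b hb
    obtain ⟨i, hi, h⟩ := hf.exists_pow_eq ha hb
    exact ⟨i, mem_range.2 hi, h⟩
  · simp

section Words

variable {n : ℕ}

/-- The transposition of the positions `i` and `i + 1`. -/
def adjSwap (n i : ℕ) : Equiv.Perm (Fin n) :=
  if h : i + 1 < n then Equiv.swap ⟨i, by omega⟩ ⟨i + 1, h⟩ else 1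

theorem adjSwap_val {i : ℕ} (h : i + 1 < n) (x : Fin n) :
    (adjSwap n i x : ℕ) = if (x : ℕ) = i then i + 1 else if (x : ℕ) = i + 1 then i else x := by
  rw [adjSwap, dif_pos h, Equiv.swap_apply_def]
  simp only [Fin.ext_iff]
  split_ifs <;> rfl

theorem adjSwap_mul_self (n i : ℕ) : adjSwap n i * adjSwap n i = 1 := by
  rw [adjSwap]
  split_ifs <;> simp

/-- The operator exchanging the letters in positions `i` and `i + 1` of a word. -/
noncomputable def adjOp (n i : ℕ) : Matrix (Equiv.Perm (Fin n)) (Equiv.Perm (Fin n)) (QRing n) :=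
  if h : i + 1 < n then
    translationMatrix (adjSwap n i) fun σ => q (σ ⟨i, by omega⟩) (σ ⟨i + 1, h⟩)
  else 0

theorem adjOp_comm (i j : ℕ) (hij : i + 2 ≤ j) :
    adjOp n i * adjOp n j = adjOp n j * adjOp n i := by
  by_cases hj : j + 1 < n
  · have hi : i + 1 < n := by omega
    simp only [adjOp, dif_pos hi, dif_pos hj, translationMatrix_mul]
    congr 1
    · ext x
      simp only [Equiv.Perm.mul_apply, adjSwap_val hi, adjSwap_val hj]
      split_ifs <;> omega
    · have h1 : adjSwap n i ⟨j, by omega⟩ = ⟨j, by omega⟩ := by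
        ext; rw [adjSwap_val hi]; grind
      have h2 : adjSwap n i ⟨j + 1, hj⟩ = ⟨j + 1, hj⟩ := by
        ext; rw [adjSwap_val hi]; grind
      have h3 : adjSwap n j ⟨i, by omega⟩ = ⟨i, by omega⟩ := by
        ext; rw [adjSwap_val hj]; grind
      have h4 : adjSwap n j ⟨i + 1, hi⟩ = ⟨i + 1, hi⟩ := by
        ext; rw [adjSwap_val hj]; grind
      funext σ
      simp only [Equiv.Perm.mul_apply, h1, h2, h3, h4]
      exact mul_comm _ _
  · simp [adjOp, hj]

theorem adjOp_braid (i : ℕ) :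
    adjOp n i * adjOp n (i + 1) * adjOp n i = adjOp n (i + 1) * adjOp n i * adjOp n (i + 1) := by
  by_cases hj : i + 1 + 1 < n
  · have hi : i + 1 < n := by omega
    simp only [adjOp, dif_pos hi, dif_pos hj, translationMatrix_mul]
    congr 1
    · ext x
      simp only [Equiv.Perm.mul_apply, adjSwap_val hi, adjSwap_val hj]
      grind
    · have h1 : adjSwap n i ⟨i, by omega⟩ = ⟨i + 1, hi⟩ := by
        ext; rw [adjSwap_val hi]; grind
      have h2 : adjSwap n i ⟨i + 1, hi⟩ = ⟨i, by omega⟩ := by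
        ext; rw [adjSwap_val hi]; grind
      have h3 : adjSwap n i ⟨i + 1 + 1, hj⟩ = ⟨i + 1 + 1, hj⟩ := by
        ext; rw [adjSwap_val hi]; grind
      have h4 : adjSwap n (i + 1) ⟨i, by omega⟩ = ⟨i, by omega⟩ := by
        ext; rw [adjSwap_val hj]; grind
      have h5 : adjSwap n (i + 1) ⟨i + 1, hi⟩ = ⟨i + 1 + 1, hj⟩ := by
        ext; rw [adjSwap_val hj]; grind
      have h6 : adjSwap n (i + 1) ⟨i + 1 + 1, hj⟩ = ⟨i + 1, hi⟩ := by
        ext; rw [adjSwap_val hj]; grind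
      funext σ
      simp only [Equiv.Perm.mul_apply, h1, h2, h3, h4, h5, h6]
      ring
  · simp [adjOp, hj]

/-- The cycle moving the letter in position `k + l` of a word to position `k`. -/
def descCycle (n k l : ℕ) : Equiv.Perm (Fin n) := descProd (adjSwap n) k l

theorem descCycle_val {k l : ℕ} (h : k + l < n) (x : Fin n) :
    (descCycle n k l x : ℕ) =
      if (x : ℕ) = k then k + l else if k < x ∧ (x : ℕ) ≤ k + l then x - 1 else x := by
  induction l with
  | zero => simp only [descCycle, descProd, Equiv.Perm.one_apply]; grind
  | succ l ih =>
    have hr : descCycle n k (l + 1) = adjSwap n (k + l) * descCycle n k l := rfl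
    rw [hr, Equiv.Perm.mul_apply, adjSwap_val (by omega), ih (by omega)]
    grind

theorem descCycle_inv_val {k l : ℕ} (h : k + l < n) (x : Fin n) :
    ((descCycle n k l)⁻¹ x : ℕ) =
      if (x : ℕ) = k + l then k else if k ≤ x ∧ (x : ℕ) < k + l then x + 1 else x := by
  have hx := descCycle_val h ((descCycle n k l)⁻¹ x)
  rw [Equiv.Perm.inv_def, Equiv.apply_symm_apply] at hx
  rw [Equiv.Perm.inv_def]
  grind

/-- The weight picked up by moving the letter in position `k + l` of a word to position `k`. -/
noncomputable def descWeight (k l : ℕ) (h : k + l < n) (σ : Equiv.Perm (Fin n)) : QRing n :=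
  ∏ x ∈ univ.filter (fun x : Fin n => k ≤ (x : ℕ) ∧ (x : ℕ) < k + l), q (σ x) (σ ⟨k + l, h⟩)

theorem descProd_adjOp {k l : ℕ} (h : k + l < n) :
    descProd (adjOp n) k l = translationMatrix (descCycle n k l) (descWeight k l h) := by
  induction l with
  | zero =>
    have : descWeight (n := n) k 0 h = fun _ => 1 := by
      funext σ
      rw [descWeight, filter_false_of_mem (by grind), prod_empty]
    rw [this]
    exact translationMatrix_one.symm
  | succ l ih =>
    have h' : k + l + 1 < n := h
    rw [descProd, ih (by omega), adjOp, dif_pos h', translationMatrix_mul]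
    change translationMatrix (descCycle n k (l + 1)) _ = _
    congr 1
    funext σ
    have h1 : adjSwap n (k + l) ⟨k + l, by omega⟩ = ⟨k + l + 1, h'⟩ := by
      ext; rw [adjSwap_val h']; grind
    have h2 (x : Fin n) (hx : (x : ℕ) < k + l) : adjSwap n (k + l) x = x := by
      ext; rw [adjSwap_val h']; grind
    have h3 : univ.filter (fun x : Fin n => k ≤ x ∧ (x : ℕ) < k + (l + 1)) =
        insert ⟨k + l, by omega⟩ (univ.filter fun x : Fin n => k ≤ x ∧ (x : ℕ) < k + l) := by
      ext x
      simp only [mem_filter_univ, mem_insert, Fin.ext_iff]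
      omega
    rw [descWeight, descWeight, h3, prod_insert (by simp)]
    congr 1
    refine prod_congr rfl fun x hx => ?_
    rw [Equiv.Perm.mul_apply, Equiv.Perm.mul_apply, h1, h2 x (by grind)]
    rfl

/-- The positions `k, …, k + l` of a word. -/
def posIcc (n k l : ℕ) : Finset (Fin n) := {x | k ≤ x ∧ (x : ℕ) ≤ k + l}

theorem mem_posIcc {k l : ℕ} {x : Fin n} : x ∈ posIcc n k l ↔ k ≤ x ∧ (x : ℕ) ≤ k + l := by
  simp [posIcc]

theorem card_posIcc {k l : ℕ} (h : k + l < n) : #(posIcc n k l) = l + 1 := by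
  have : (posIcc n k l).map Fin.valEmbedding = Icc k (k + l) := by
    ext y
    simp only [mem_map, mem_posIcc, Fin.valEmbedding_apply, mem_Icc]
    exact ⟨by rintro ⟨x, hx, rfl⟩; exact hx, fun hy => ⟨⟨y, by omega⟩, hy, rfl⟩⟩
  rw [← card_map, this, Nat.card_Icc]
  omega

theorem posIcc_succ {k l : ℕ} (h : k + l + 1 < n) :
    posIcc n k (l + 1) = insert ⟨k + l + 1, h⟩ (posIcc n k l) := by
  ext x
  simp only [mem_insert, mem_posIcc, Fin.ext_iff]
  omega

theorem isCycleOn_descCycle {k l : ℕ} (h : k + l < n) :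
    (descCycle n k l).IsCycleOn (posIcc n k l) := by
  have hmaps : Set.MapsTo (descCycle n k l) (posIcc n k l) (posIcc n k l) := by
    intro x hx
    rw [SetLike.mem_coe, mem_posIcc] at hx ⊢
    rw [descCycle_val h]
    grind
  have hk (m : ℕ) (hm : m ≤ l) :
      (descCycle n k l).SameCycle ⟨k, by omega⟩ ⟨k + m, by omega⟩ := by
    induction m with
    | zero => exact .rfl
    | succ m ih =>
      have : descCycle n k l ⟨k + (m + 1), by omega⟩ = ⟨k + m, by omega⟩ := by
        ext; rw [descCycle_val h]; grind
      have h2 := ih (by omega)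
      rwa [← this, Equiv.Perm.sameCycle_apply_right] at h2
  have hk' {x : Fin n} (hx : x ∈ posIcc n k l) :
      (descCycle n k l).SameCycle ⟨k, by omega⟩ x := by
    rw [mem_posIcc] at hx
    convert! hk (x - k) (by omega)
    omega
  refine ⟨⟨hmaps, (descCycle n k l).injective.injOn, ?_⟩, fun x hx y hy =>
    (hk' hx).symm.trans (hk' hy)⟩
  exact Finset.surjOn_of_injOn_of_card_le _ hmaps (descCycle n k l).injective.injOn le_rfl

theorem descCycle_apply_of_notMem {k l : ℕ} (h : k + l < n) {x : Fin n} (hx : x ∉ posIcc n k l) :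
    descCycle n k l x = x := by
  ext
  rw [mem_posIcc] at hx
  rw [descCycle_val h]
  grind

theorem orderOf_descCycle {k l : ℕ} (h : k + l < n) : orderOf (descCycle n k l) = l + 1 := by
  rw [← card_posIcc h]
  exact Equiv.Perm.IsCycleOn.orderOf_eq_card (isCycleOn_descCycle h) (card_pos.1 (by simp [card_posIcc h]))
    fun x => descCycle_apply_of_notMem h

theorem image_descCycle {k l : ℕ} (h : k + l < n) :
    (posIcc n k l).image (descCycle n k l) = posIcc n k l :=
  coe_injective (by simpa using (isCycleOn_descCycle h).1.image_eq)

/-- The product of the weights of all ordered pairs of distinct elements of `I`. -/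
noncomputable def pairWeight (I : Finset (Fin n)) : QRing n :=
  ∏ b ∈ I, ∏ a ∈ I.erase b, q a b

theorem pairWeight_eq_prod_lt (I : Finset (Fin n)) :
    pairWeight I = ∏ p ∈ (I ×ˢ I).filter (fun p : Fin n × Fin n => p.1 < p.2),
      q p.1 p.2 * q p.2 p.1 := by
  have h1 : pairWeight I = ∏ p ∈ (I ×ˢ I).filter (fun p : Fin n × Fin n => p.1 ≠ p.2),
      q p.1 p.2 := by
    rw [pairWeight, prod_filter, prod_product_right]
    refine prod_congr rfl fun b _ => ?_
    rw [← prod_filter, filter_ne']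
  have h2 : (I ×ˢ I).filter (fun p : Fin n × Fin n => p.1 ≠ p.2) =
      (I ×ˢ I).filter (fun p : Fin n × Fin n => p.1 < p.2) ∪
        (I ×ˢ I).filter (fun p : Fin n × Fin n => p.2 < p.1) := by
    rw [← filter_or]
    exact filter_congr fun p _ => lt_or_lt_iff_ne.symm
  rw [h1, h2, prod_union (disjoint_filter.2 fun p _ h => h.not_gt), prod_mul_distrib]
  congr 1
  exact prod_equiv (Equiv.prodComm _ _) (by simp [and_comm]) (by simp)

theorem pairWeight_insert {c : Fin n} {I : Finset (Fin n)} (hc : c ∉ I) :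
    pairWeight (insert c I) =
      ∏ b ∈ I, (q b c * q c b * ∏ a ∈ I.erase b, q a b) := by
  rw [pairWeight, prod_insert hc, erase_insert hc, ← prod_mul_distrib]
  refine prod_congr rfl fun b hb => ?_
  have hcb : c ≠ b := by rintro rfl; exact hc hb
  rw [erase_insert_of_ne hcb, prod_insert (by simp [hc]), mul_assoc]

theorem descWeight_eq {k l : ℕ} (h : k + l < n) (σ : Equiv.Perm (Fin n)) :
    descWeight k l h σ =
      ∏ a ∈ ((posIcc n k l).image σ).erase (σ ⟨k + l, h⟩), q a (σ ⟨k + l, h⟩) := by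
  rw [← image_erase σ.injective, prod_image σ.injective.injOn, descWeight]
  congr 1
  ext x
  simp only [mem_filter_univ, mem_erase, mem_posIcc, ne_eq, Fin.ext_iff]
  omega

theorem image_mul_descCycle_pow {k l : ℕ} (h : k + l < n) (σ : Equiv.Perm (Fin n)) (i : ℕ) :
    (posIcc n k l).image ⇑(σ * descCycle n k l ^ i) = (posIcc n k l).image σ := by
  induction i with
  | zero => simp
  | succ i ih =>
    rw [pow_succ, ← mul_assoc, Equiv.Perm.coe_mul, ← image_image, image_descCycle h, ih]

theorem prod_descWeight {k l : ℕ} (h : k + l < n) (F : Fin n → QRing n) (σ : Equiv.Perm (Fin n)) :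
    ∏ i ∈ range (l + 1), (F ((σ * descCycle n k l ^ i) ⟨k + l, h⟩) *
        descWeight k l h (σ * descCycle n k l ^ i)) =
      ∏ b ∈ (posIcc n k l).image σ, (F b * ∏ a ∈ ((posIcc n k l).image σ).erase b, q a b) := by
  simp_rw [descWeight_eq, image_mul_descCycle_pow h]
  rw [prod_image σ.injective.injOn, ← Equiv.Perm.IsCycleOn.prod_range_pow_apply (isCycleOn_descCycle h)
    (a := ⟨k + l, h⟩) (by simp [mem_posIcc]), card_posIcc h]
  rfl

theorem card_image_posIcc_eq {k l : ℕ} (h : k + l < n) {I : Finset (Fin n)}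
    (hI : I ∈ powersetCard (l + 1) univ) :
    #{σ : Equiv.Perm (Fin n) | (posIcc n k l).image σ = I} =
      (l + 1).factorial * (n - (l + 1)).factorial := by
  rw [card_perm_image_eq (by rw [card_posIcc h, (mem_powersetCard.1 hI).2]), card_posIcc h,
    Fintype.card_fin]

theorem image_posIcc_mem {k l : ℕ} (h : k + l < n) (σ : Equiv.Perm (Fin n)) :
    (posIcc n k l).image σ ∈ powersetCard (l + 1) univ := by
  rw [mem_powersetCard, card_image_of_injective _ σ.injective, card_posIcc h]
  simp

theorem det_one_sub_descProd {k l : ℕ} (h : k + l < n) :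
    (1 - descProd (adjOp n) k l).det = ∏ I ∈ powersetCard (l + 1) univ,
      (1 - pairWeight I) ^ (l.factorial * (n - (l + 1)).factorial) := by
  rw [descProd_adjOp h]
  refine det_one_sub_translationMatrix_of_invariant _ _
    (fun σ : Equiv.Perm (Fin n) => (posIcc n k l).image σ) ?_ _ ?_ _ (image_posIcc_mem h) _ ?_
  · intro σ
    simpa using image_mul_descCycle_pow h σ 1
  · intro σ
    rw [orderOf_descCycle h]
    simpa only [Pi.one_apply, one_mul, pairWeight] using prod_descWeight h 1 σ
  · intro I hI
    rw [card_image_posIcc_eq h hI, orderOf_descCycle h, Nat.factorial_succ]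
    ring

theorem det_one_sub_adjOp_mul_descProd {k l : ℕ} (h : k + l + 1 < n) :
    (1 - adjOp n (k + l) * descProd (adjOp n) k (l + 1)).det = ∏ I ∈ powersetCard (l + 2) univ,
      (1 - pairWeight I) ^ ((l + 2) * l.factorial * (n - (l + 2)).factorial) := by
  have h' : k + l < n := by omega
  have h1 : adjSwap n (k + l) ⟨k + l, h'⟩ = ⟨k + l + 1, h⟩ := by
    ext; rw [adjSwap_val h]; grind
  have h2 : adjSwap n (k + l) ⟨k + l + 1, h⟩ = ⟨k + l, h'⟩ := by
    ext; rw [adjSwap_val h]; grind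
  have hlast (i : ℕ) : (descCycle n k l ^ i) ⟨k + l + 1, h⟩ = ⟨k + l + 1, h⟩ :=
    Function.IsFixedPt.perm_pow (descCycle_apply_of_notMem h' (by simp [mem_posIcc])) i
  have hE : adjOp n (k + l) * descProd (adjOp n) k (l + 1) =
      translationMatrix (descCycle n k l) fun σ =>
        q (σ ⟨k + l, h'⟩) (σ ⟨k + l + 1, h⟩) * q (σ ⟨k + l + 1, h⟩) (σ ⟨k + l, h'⟩) *
          descWeight k l h' σ := by
    rw [descProd, descProd_adjOp h', adjOp, dif_pos h, ← mul_assoc, translationMatrix_mul,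
      translationMatrix_mul, adjSwap_mul_self, one_mul]
    simp only [Equiv.Perm.mul_apply, h1, h2, mul_one]
  rw [hE]
  refine det_one_sub_translationMatrix_of_invariant _ _
    (fun σ : Equiv.Perm (Fin n) => (posIcc n k (l + 1)).image σ) ?_ _ ?_ _ (image_posIcc_mem h) _ ?_
  · intro σ
    have := image_mul_descCycle_pow h' σ 1
    have hl := hlast 1
    rw [pow_one] at this hl
    rw [posIcc_succ h, image_insert, image_insert, this, Equiv.Perm.mul_apply, hl]
  · intro σ
    have := prod_descWeight h' (fun b => q b (σ ⟨k + l + 1, h⟩) * q (σ ⟨k + l + 1, h⟩) b) σ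
    rw [posIcc_succ h, image_insert, pairWeight_insert, ← this, orderOf_descCycle h']
    · simp only [Equiv.Perm.mul_apply, hlast]
    · simp [mem_posIcc]
  · intro I hI
    rw [card_image_posIcc_eq (l := l + 1) h hI, orderOf_descCycle h', Nat.factorial_succ, Nat.factorial_succ]
    ring

theorem one_sub_pairWeight_ne_zero {I : Finset (Fin n)} (hI : 2 ≤ #I) : 1 - pairWeight I ≠ 0 := by
  intro h
  obtain ⟨b, hb, a, ha, hab⟩ := one_lt_card.1 hI
  have h0 : MvPolynomial.eval (fun _ => 0) (pairWeight I) = 0 := by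
    rw [pairWeight, map_prod]
    refine prod_eq_zero hb ?_
    rw [map_prod]
    refine prod_eq_zero (mem_erase.2 ⟨hab.symm, ha⟩) ?_
    simp [q, hab.symm]
  have := congrArg (MvPolynomial.eval fun _ => 0) h
  rw [map_sub, h0] at this
  simp at this

theorem det_descSum {k l : ℕ} (h : k + l < n) :
    (descSum (adjOp n) k l).det = ∏ m ∈ range l, ∏ I ∈ powersetCard (m + 2) univ,
      (1 - pairWeight I) ^ (m.factorial * (n - (m + 2)).factorial) := by
  induction l generalizing k with
  | zero => simp [descSum]
  | succ l ih =>
    have key := congrArg Matrix.det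
      (descSum_mul_one_sub (T := adjOp n) adjOp_comm adjOp_braid k l)
    rw [Matrix.det_mul, Matrix.det_mul, det_one_sub_descProd h,
      det_one_sub_adjOp_mul_descProd h, ih (by omega)] at key
    have hne : ∏ I ∈ powersetCard (l + 2) (univ : Finset (Fin n)),
        (1 - pairWeight I) ^ ((l + 1).factorial * (n - (l + 2)).factorial) ≠ 0 := by
      refine prod_ne_zero_iff.2 fun I hI => pow_ne_zero _ (one_sub_pairWeight_ne_zero ?_)
      rw [(mem_powersetCard.1 hI).2]
      omega
    refine mul_right_cancel₀ hne (key.trans ?_)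
    rw [prod_range_succ]
    refine (mul_comm _ _).trans (Eq.trans ?_ (mul_assoc _ _ _).symm)
    rw [← prod_mul_distrib]
    congr 1
    refine prod_congr rfl fun I _ => ?_
    rw [← pow_add]
    congr 1
    rw [Nat.factorial_succ]
    ring

theorem vn_eq_prod_letters (σ τ : Equiv.Perm (Fin n)) :
    vn σ τ = ∏ p : Fin n × Fin n,
      if σ⁻¹ p.1 < σ⁻¹ p.2 ∧ τ⁻¹ p.2 < τ⁻¹ p.1 then q p.1 p.2 else 1 := by
  rw [vn, prod_filter]
  exact Fintype.prod_equiv (Equiv.prodCongr σ σ) _ _ fun p => by simp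

theorem vn_mul_vn {σ τ ρ : Equiv.Perm (Fin n)}
    (h : ∀ a b, σ⁻¹ a < σ⁻¹ b → ρ⁻¹ a < ρ⁻¹ b → τ⁻¹ a < τ⁻¹ b) :
    vn σ τ * vn τ ρ = vn σ ρ := by
  simp only [vn_eq_prod_letters, ← prod_mul_distrib]
  refine prod_congr rfl fun ⟨a, b⟩ _ => ?_
  rcases eq_or_ne a b with rfl | hab
  · simp
  have hab' (π : Equiv.Perm (Fin n)) : π⁻¹ a ≠ π⁻¹ b := fun e => hab (π⁻¹.injective e)
  have h1 := h a b
  have h2 := h b a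
  have hσ := hab' σ
  have hτ := hab' τ
  have hρ := hab' ρ
  dsimp only
  split_ifs <;> grind

theorem vn_mul_descCycle {k l : ℕ} (h : k + l < n) (σ : Equiv.Perm (Fin n)) :
    vn σ (σ * descCycle n k l) = descWeight k l h σ := by
  have : univ.filter (fun p : Fin n × Fin n => p.1 < p.2 ∧
      (σ * descCycle n k l)⁻¹ (σ p.2) < (σ * descCycle n k l)⁻¹ (σ p.1)) =
      (univ.filter fun x : Fin n => k ≤ x ∧ (x : ℕ) < k + l).image fun x => (x, ⟨k + l, h⟩) := by
    ext ⟨x, y⟩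
    have hx := descCycle_inv_val h x
    have hy := descCycle_inv_val h y
    have hinv (z : Fin n) : (σ * descCycle n k l)⁻¹ (σ z) = (descCycle n k l)⁻¹ z := by simp
    simp only [mem_filter_univ, mem_image, hinv, Fin.lt_def, Prod.mk.injEq, hx, hy]
    constructor
    · intro hxy
      exact ⟨x, by grind, rfl, by ext; grind⟩
    · rintro ⟨x, hx, rfl, rfl⟩
      grind
  rw [vn, this, prod_image fun _ _ _ _ h => (Prod.mk.inj h).1, descWeight]

/-- The restriction of the matrix `vn` to pairs of words that agree from position `p` on. -/
noncomputable def vnAgree (n p : ℕ) :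
    Matrix (Equiv.Perm (Fin n)) (Equiv.Perm (Fin n)) (QRing n) :=
  Matrix.of fun σ τ => if ∀ x : Fin n, p ≤ x → σ x = τ x then vn σ τ else 0

theorem vnAgree_zero (n : ℕ) : vnAgree n 0 = 1 := by
  ext1 σ τ
  have : (∀ x : Fin n, 0 ≤ (x : ℕ) → σ x = τ x) ↔ σ = τ := by simp [Equiv.ext_iff]
  rw [vnAgree, Matrix.of_apply, Matrix.one_apply]
  simp only [this]
  split_ifs with h
  · subst h
    rw [vn, filter_false_of_mem, prod_empty]
    intro p _ hp
    rw [Equiv.Perm.inv_def, Equiv.symm_apply_apply, Equiv.symm_apply_apply] at hp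
    exact hp.1.not_gt hp.2
  · rfl

theorem vnAgree_self (n : ℕ) : vnAgree n n = Matrix.of fun σ τ => vn σ τ := by
  ext1 σ τ
  rw [vnAgree, Matrix.of_apply, if_pos fun x hx => absurd x.2 (by omega)]
  rfl

theorem vnAgree_mul_descSum_apply {p : ℕ} (hp : p < n) (σ τ : Equiv.Perm (Fin n)) :
    (vnAgree n p * descSum (adjOp n) 0 p) σ τ = ∑ j ∈ range (p + 1),
      vnAgree n p σ (τ * (descCycle n j (p - j))⁻¹) * vn (τ * (descCycle n j (p - j))⁻¹) τ := by
  rw [descSum_eq_sum, Matrix.mul_sum, Matrix.sum_apply]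
  refine sum_congr rfl fun j hj => ?_
  rw [zero_add]
  have hj : j + (p - j) < n := by grind
  rw [descProd_adjOp hj, Matrix.mul_apply,
    sum_eq_single (τ * (descCycle n j (p - j))⁻¹)]
  · rw [translationMatrix_apply, if_pos (by simp), ← vn_mul_descCycle, inv_mul_cancel_right]
  · intro ρ _ hρ
    rw [translationMatrix_apply, if_neg, mul_zero]
    rintro rfl
    simp at hρ
  · simp

theorem vnAgree_succ {p : ℕ} (hp : p < n) :
    vnAgree n (p + 1) = vnAgree n p * descSum (adjOp n) 0 p := by
  ext1 σ τ
  rw [vnAgree_mul_descSum_apply hp]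
  have hfix {j : ℕ} (hj : j ≤ p) {x : Fin n} (hx : p < x) :
      (descCycle n j (p - j))⁻¹ x = x := by
    ext; rw [descCycle_inv_val (by omega)]; grind
  have hlast {j : ℕ} (hj : j ≤ p) : (descCycle n j (p - j))⁻¹ ⟨p, hp⟩ = ⟨j, by omega⟩ := by
    ext; rw [descCycle_inv_val (by omega)]; grind
  by_cases h : ∀ x : Fin n, p + 1 ≤ x → σ x = τ x
  · have hj : (τ⁻¹ (σ ⟨p, hp⟩) : ℕ) ≤ p := by
      by_contra! hlt
      have := h _ hlt
      rw [Equiv.Perm.inv_def, Equiv.apply_symm_apply, EmbeddingLike.apply_eq_iff_eq] at this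
      rw [Equiv.Perm.inv_def, this] at hlt
      exact lt_irrefl _ hlt
    rw [vnAgree, Matrix.of_apply, if_pos h, sum_eq_single (τ⁻¹ (σ ⟨p, hp⟩) : ℕ)]
    · set j : ℕ := (τ⁻¹ (σ ⟨p, hp⟩) : ℕ) with hjdef
      have hagree : ∀ x : Fin n, p ≤ x → σ x = (τ * (descCycle n j (p - j))⁻¹) x := by
        intro x hx
        rw [Equiv.Perm.mul_apply]
        rcases hx.eq_or_lt with rfl | hx
        · rw [hlast hj]
          simp [hjdef]
        · rw [hfix hj hx, h x hx]
      rw [vnAgree, Matrix.of_apply, if_pos hagree, vn_mul_vn]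
      intro a b hab hab'
      have hinv (y : Fin n) : (τ * (descCycle n j (p - j))⁻¹)⁻¹ y =
          descCycle n j (p - j) (τ⁻¹ y) := by simp
      have hb : p < (σ⁻¹ b : Fin n) → ((τ⁻¹ b : Fin n) : ℕ) = (σ⁻¹ b : Fin n) := by
        intro hlt
        rw [Fin.val_inj, Equiv.Perm.inv_eq_iff_eq, ← h _ hlt]
        simp
      have ha : (τ⁻¹ a : ℕ) = j → (σ⁻¹ a : ℕ) = p := by
        intro haj
        rw [hjdef, Fin.val_inj, τ⁻¹.injective.eq_iff] at haj
        simp [haj]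
      rw [hinv, hinv, Fin.lt_def, descCycle_val (by omega), descCycle_val (by omega)]
      rw [Fin.lt_def] at hab hab'
      clear hagree hfix hlast hinv h hjdef
      generalize ((τ⁻¹ a : Fin n) : ℕ) = u at *
      generalize ((τ⁻¹ b : Fin n) : ℕ) = v at *
      split_ifs <;> omega
    · intro j hjp hne
      rw [vnAgree, Matrix.of_apply, if_neg, zero_mul]
      intro hagree
      have := hagree ⟨p, hp⟩ le_rfl
      rw [Equiv.Perm.mul_apply, hlast (by grind)] at this
      simp [this] at hne
    · intro hn
      exact absurd (mem_range.2 (by omega)) hn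
  · rw [vnAgree, Matrix.of_apply, if_neg h, sum_eq_zero]
    intro j hj
    rw [vnAgree, Matrix.of_apply, if_neg, zero_mul]
    contrapose! h
    intro x hx
    rw [h x (by omega), Equiv.Perm.mul_apply, hfix (by grind) hx]

theorem det_vnAgree {p : ℕ} (hp : p ≤ n) :
    (vnAgree n p).det = ∏ i ∈ range p, (descSum (adjOp n) 0 i).det := by
  induction p with
  | zero => simp [vnAgree_zero]
  | succ p ih => rw [vnAgree_succ (by omega), Matrix.det_mul, ih (by omega), prod_range_succ]

end Words

theorem prod_range_prod_range {R : Type*} [CommMonoid R] (F : ℕ → R) (N : ℕ) :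
    ∏ p ∈ range (N + 1), ∏ m ∈ range p, F m = ∏ m ∈ range N, F m ^ (N - m) := by
  induction N with
  | zero => simp
  | succ N ih =>
    rw [prod_range_succ _ (N + 1), ih, prod_range_succ F N, prod_range_succ _ N, ← mul_assoc,
      ← prod_mul_distrib, Nat.add_sub_cancel_left, pow_one]
    congr 1
    refine prod_congr rfl fun m hm => ?_
    rw [← pow_succ]
    congr 1
    grind

theorem det_vn_matrix (n : ℕ) (hn : 2 ≤ n) :
    Matrix.det (Matrix.of fun σ τ : Equiv.Perm (Fin n) => vn σ τ) =
      ∏ I ∈ Finset.univ.powerset.filter (fun I : Finset (Fin n) => 2 ≤ I.card),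
        (1 - ∏ p ∈ (I ×ˢ I).filter (fun p : Fin n × Fin n => p.1 < p.2),
              q p.1 p.2 * q p.2 p.1)
          ^ ((I.card - 2).factorial * (n - I.card + 1).factorial) := by
  rw [← vnAgree_self, det_vnAgree le_rfl,
    prod_congr rfl fun p hp => det_descSum (k := 0) (l := p) (by simpa using hp)]
  obtain ⟨N, rfl⟩ : ∃ N, n = N + 2 := ⟨n - 2, by omega⟩
  rw [prod_range_prod_range, ← prod_fiberwise_of_maps_to (t := range (N + 1))
    (g := fun I : Finset (Fin (N + 2)) => #I - 2)]
  · refine prod_congr rfl fun m hm => ?_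
    have hm : m ≤ N := by grind
    rw [← prod_pow]
    refine prod_congr ?_ fun I hI => ?_
    · ext I
      simp only [mem_powersetCard, mem_filter, mem_powerset]
      grind
    · have hI : #I = m + 2 := by grind
      rw [← pairWeight_eq_prod_lt, hI, ← pow_mul, mul_assoc]
      congr 2
      rw [show N + 2 - (m + 2) + 1 = (N - m) + 1 by omega, Nat.factorial_succ,
        show N + 2 - (m + 2) = N - m by omega, show N + 1 - m = N - m + 1 by omega, mul_comm]
  · intro I hI
    have := card_le_univ I
    rw [Fintype.card_fin] at this
    grind
end

section
/- Let J be a finite set of positive integers with n := |J| ≥ 2, and work in the polynomial ring ℤ[q_{s,t} : s,t ∈ J, s ≠ t]. Let M_J be the n!×n! matrix whose rows and columns are indexed by the bijections w : {1,…,n} → J, with (w,w') entry equal to ∏ q_{w(i),w(j)}, the product over all pairs (i,j) with 1 ≤ i < j ≤ n and w'⁻¹(w(i)) > w'⁻¹(w(j)). Then det M_J = ∏_{K ⊆ J, |K| ≥ 2} (1 − ∏_{{s,t} ⊆ K, s < t} q_{s,t} q_{t,s})^{(|K|−2)!·(n−|K|+1)!}. -/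
/-- The polynomial ring `ℤ[q_{s,t} : s,t ∈ J, s ≠ t]` for a finite set `J`
of positive integers. -/
abbrev QRingJ (J : Finset ℕ+) : Type :=
  MvPolynomial {p : ℕ+ × ℕ+ // p.1 ∈ J ∧ p.2 ∈ J ∧ p.1 ≠ p.2} ℤ

/-- The variable `q_{s,t}` for `s,t ∈ J`, `s ≠ t` (junk value `0` otherwise,
which is never used). -/
noncomputable def qJ (J : Finset ℕ+) (s t : ℕ+) : QRingJ J :=
  if h : s ∈ J ∧ t ∈ J ∧ s ≠ t then MvPolynomial.X ⟨(s, t), h⟩ else 0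

instance (J : Finset ℕ+) : DecidableEq (Fin J.card ≃ {x : ℕ+ // x ∈ J}) :=
  fun e f =>
    decidable_of_iff (∀ i, e i = f i) ⟨fun h => Equiv.ext h, fun h i => by rw [h]⟩

section Orderings

variable {α R : Type*} [CommRing R]

/-- The words in which every element of `J` occurs exactly once and no other letter occurs. -/
abbrev OrderingsOf (J : Finset α) : Type _ := {l : List α // l ∈ J.val.lists}

lemma mem_lists_iff_coe {J : Finset α} {l : List α} :
    l ∈ J.val.lists ↔ (l : Multiset α) = J.val := by
  rw [Multiset.mem_lists_iff]
  exact eq_comm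

namespace OrderingsOf

lemma coe_eq {J : Finset α} (w : OrderingsOf J) : (w.1 : Multiset α) = J.val :=
  mem_lists_iff_coe.1 w.2

lemma nodup {J : Finset α} (w : OrderingsOf J) : w.1.Nodup := by
  rw [← Multiset.coe_nodup, w.coe_eq]
  exact J.nodup

lemma mem_iff {J : Finset α} (w : OrderingsOf J) {a : α} : a ∈ w.1 ↔ a ∈ J := by
  rw [← Multiset.mem_coe, w.coe_eq, Finset.mem_val]

lemma length_eq {J : Finset α} (w : OrderingsOf J) : w.1.length = J.card := by
  rw [← Multiset.coe_card, w.coe_eq, Finset.card_val]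

lemma prod_map {J : Finset α} (w : OrderingsOf J) (g : α → R) :
    (w.1.map g).prod = ∏ x ∈ J, g x := by
  rw [← Multiset.prod_coe, ← Multiset.map_coe, w.coe_eq]
  rfl

lemma perm {J : Finset α} (w w' : OrderingsOf J) : w.1.Perm w'.1 := by
  rw [← Multiset.coe_eq_coe, w.coe_eq, w'.coe_eq]

lemma mem_lists_of_perm {J : Finset α} (w : OrderingsOf J) {l : List α} (h : l.Perm w.1) :
    l ∈ J.val.lists := by
  rw [mem_lists_iff_coe, ← w.coe_eq]
  exact Multiset.coe_eq_coe.2 h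

lemma ne_nil {J : Finset α} (hJ : J.Nonempty) (w : OrderingsOf J) : w.1 ≠ [] := by
  rw [← List.length_pos_iff, w.length_eq]
  exact hJ.card_pos

variable [DecidableEq α]

lemma cons_mem {J : Finset α} {a : α} (ha : a ∈ J) (u : OrderingsOf (J.erase a)) :
    a :: u.1 ∈ J.val.lists := by
  rw [mem_lists_iff_coe, ← Multiset.cons_coe, u.coe_eq, Finset.erase_val,
      Multiset.cons_erase ha]

lemma snoc_mem {J : Finset α} {a : α} (ha : a ∈ J) (u : OrderingsOf (J.erase a)) :
    u.1 ++ [a] ∈ J.val.lists :=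
  mem_lists_of_perm ⟨_, cons_mem ha u⟩ (List.perm_append_singleton a u.1)

lemma mem_erase_of_cons {J : Finset α} {a : α} {u : List α} (h : a :: u ∈ J.val.lists) :
    a ∈ J ∧ u ∈ (J.erase a).val.lists := by
  rw [mem_lists_iff_coe, ← Multiset.cons_coe] at h
  refine ⟨?_, ?_⟩
  · rw [← Finset.mem_val, ← h]
    exact Multiset.mem_cons_self a _
  · rw [mem_lists_iff_coe, Finset.erase_val, ← h, Multiset.erase_cons_head]

/-- Decomposition of words by their first letter. -/
noncomputable def consEquiv {J : Finset α} (hJ : J.Nonempty) :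
    (Σ a : J, OrderingsOf (J.erase a)) ≃ OrderingsOf J :=
  Equiv.ofBijective (fun x => ⟨x.1.1 :: x.2.1, cons_mem x.1.2 x.2⟩) <| by
    constructor
    · rintro ⟨⟨a, ha⟩, ⟨u, hu⟩⟩ ⟨⟨b, hb⟩, ⟨v, hv⟩⟩ h
      simp only [Subtype.mk.injEq, List.cons.injEq] at h
      obtain ⟨rfl, rfl⟩ := h
      rfl
    · rintro ⟨l, hl⟩
      obtain ⟨a, u, rfl⟩ := List.exists_cons_of_ne_nil (ne_nil hJ ⟨l, hl⟩)
      obtain ⟨ha, hu⟩ := mem_erase_of_cons hl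
      exact ⟨⟨⟨a, ha⟩, ⟨u, hu⟩⟩, rfl⟩

@[simp] lemma consEquiv_coe {J : Finset α} (hJ : J.Nonempty)
    (x : Σ a : J, OrderingsOf (J.erase a)) : (consEquiv hJ x).1 = x.1.1 :: x.2.1 := rfl

/-- Decomposition of words by their last letter. -/
noncomputable def snocEquiv {J : Finset α} (hJ : J.Nonempty) :
    (Σ a : J, OrderingsOf (J.erase a)) ≃ OrderingsOf J :=
  Equiv.ofBijective (fun x => ⟨x.2.1 ++ [x.1.1], snoc_mem x.1.2 x.2⟩) <| by
    constructor
    · rintro ⟨⟨a, ha⟩, ⟨u, hu⟩⟩ ⟨⟨b, hb⟩, ⟨v, hv⟩⟩ h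
      simp only [Subtype.mk.injEq, List.append_singleton_inj] at h
      obtain ⟨rfl, rfl⟩ := h
      rfl
    · intro w
      obtain ⟨u, a, hw⟩ := (w.1.eq_nil_or_concat').resolve_left (ne_nil hJ w)
      have h : a :: u ∈ J.val.lists :=
        mem_lists_of_perm w (hw ▸ (List.perm_append_singleton a u).symm)
      obtain ⟨ha, hu⟩ := mem_erase_of_cons h
      exact ⟨⟨⟨a, ha⟩, ⟨u, hu⟩⟩, Subtype.ext hw.symm⟩

@[simp] lemma snocEquiv_coe {J : Finset α} (hJ : J.Nonempty)
    (x : Σ a : J, OrderingsOf (J.erase a)) : (snocEquiv hJ x).1 = x.2.1 ++ [x.1.1] := rfl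

lemma card_eq_factorial (J : Finset α) : Fintype.card (OrderingsOf J) = J.card.factorial := by
  induction hn : J.card generalizing J with
  | zero =>
    obtain rfl := Finset.card_eq_zero.1 hn
    rw [Nat.factorial_zero, Fintype.card_eq_one_iff]
    refine ⟨⟨[], mem_lists_iff_coe.2 rfl⟩, fun w => Subtype.ext ?_⟩
    rw [← List.length_eq_zero_iff, w.length_eq, Finset.card_empty]
  | succ n ih =>
    have hJ : J.Nonempty := Finset.card_pos.1 (by omega)
    have hcard (a : J) : Fintype.card (OrderingsOf (J.erase a.1)) = n.factorial :=
      ih (J.erase a.1) (by rw [Finset.card_erase_of_mem a.2, hn]; rfl)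
    rw [← Fintype.card_congr (consEquiv hJ), Fintype.card_sigma,
      Finset.sum_congr rfl fun a _ => hcard a]
    simp [hn, Nat.factorial_succ]

end OrderingsOf
end Orderings

section Determinants

variable {X R : Type*} [Fintype X] [DecidableEq X] [CommRing R]

lemma Matrix.det_eq_prod_diag_of_lt (M : Matrix X X R) (b : X → ℕ)
    (h : ∀ x y, x ≠ y → M x y ≠ 0 → b x < b y) : M.det = ∏ x, M x x := by
  rw [← Matrix.det_transpose, Matrix.det_apply, Finset.sum_eq_single (1 : Equiv.Perm X)]
  · simp
  · intro σ _ hσ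
    have key : ∃ x, M x (σ x) = 0 := by
      by_contra! hne
      apply hσ
      have hle : ∀ x ∈ Finset.univ, b x ≤ b (σ x) := by
        intro x _
        by_cases hx : x = σ x
        · rw [← hx]
        · exact (h _ _ hx (hne x)).le
      have heq := (Finset.sum_eq_sum_iff_of_le hle).1 (Equiv.sum_comp σ b).symm
      ext x
      by_contra hx
      exact absurd (heq x (Finset.mem_univ x)) (h _ _ (Ne.symm hx) (hne x)).ne
    obtain ⟨x, hx⟩ := key
    rw [Finset.prod_eq_zero (Finset.mem_univ x) (by simpa using hx), smul_zero]
  · simp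

lemma Matrix.det_eq_prod_diag_of_gt (M : Matrix X X R) (b : X → ℕ)
    (h : ∀ x y, x ≠ y → M x y ≠ 0 → b y < b x) : M.det = ∏ x, M x x := by
  rw [← Matrix.det_transpose,
    Matrix.det_eq_prod_diag_of_lt M.transpose b fun x y hxy hM => h y x hxy.symm hM]
  rfl

lemma weightedShift_pow_apply (r : X → X) (c : X → R) (k : ℕ) (x y : X) :
    ((Matrix.of fun x y => if y = r x then c x else 0) ^ k) x y =
      if y = r^[k] x then ∏ i ∈ Finset.range k, c (r^[i] x) else 0 := by
  induction k generalizing x with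
  | zero => by_cases h : x = y <;> simp [h, Ne.symm]
  | succ k ih =>
    rw [pow_succ', Matrix.mul_apply, Finset.prod_range_succ']
    rw [Finset.sum_eq_single (r x) (fun z _ hz => by simp [hz]) (by simp), ih]
    simp [mul_comm]

/-- The determinant of `1 - A` for a weighted permutation matrix `A`, given a section `S` of
the orbits, all of which have length `n`. -/
lemma det_one_sub_weightedShift (r : X → X) (c : X → R) (b : X → ℕ) (n : ℕ) (hn : 0 < n) (s : R)
    (hdesc : ∀ x, b x ≠ 0 → b (r x) < b x)
    (hpos : ∀ x, b x = 0 → ∀ k, 0 < k → k < n → b (r^[k] x) ≠ 0)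
    (hper : ∀ x, b x = 0 → r^[n] x = x)
    (hs : ∀ x, b x = 0 → ∏ i ∈ Finset.range n, c (r^[i] x) = s) :
    (1 - Matrix.of fun x y => if y = r x then c x else 0 : Matrix X X R).det =
      ∏ x, if b x = 0 then 1 - s else 1 := by
  set A : Matrix X X R := Matrix.of fun x y => if y = r x then c x else 0 with hA
  let L : Matrix X X R := Matrix.of fun x y =>
    if b x = 0 then (∑ k ∈ Finset.range n, A ^ k) x y else (1 : Matrix X X R) x y
  have hLterm : ∀ x, b x = 0 → ∀ y, b y = 0 → ∀ k ∈ Finset.range n, k ≠ 0 → (A ^ k) x y = 0 := by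
    intro x hx y hy k hk hk0
    rw [weightedShift_pow_apply, if_neg]
    rintro rfl
    exact hpos x hx k (Nat.pos_of_ne_zero hk0) (Finset.mem_range.1 hk) hy
  have hL00 : ∀ x, b x = 0 → ∀ y, b y = 0 → L x y = (1 : Matrix X X R) x y := by
    intro x hx y hy
    simp only [L, Matrix.of_apply, if_pos hx]
    rw [Matrix.sum_apply, Finset.sum_eq_single_of_mem 0 (Finset.mem_range.2 hn) (hLterm x hx y hy),
      pow_zero]
  have hL : L.det = 1 := by
    rw [Matrix.det_eq_prod_diag_of_lt L b]
    · refine Finset.prod_eq_one fun x _ => ?_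
      by_cases hx : b x = 0
      · rw [hL00 x hx x hx, Matrix.one_apply_eq]
      · simp [L, hx]
    · intro x y hxy hLxy
      by_cases hx : b x = 0
      · by_contra hlt
        apply hLxy
        rw [hL00 x hx y (by omega), Matrix.one_apply_ne hxy]
      · exact absurd (by simp [L, hx, Matrix.one_apply_ne hxy]) hLxy
  have hrow : ∀ x y, (L * (1 - A)) x y =
      if b x = 0 then ((1 : Matrix X X R) - A ^ n) x y else ((1 : Matrix X X R) - A) x y := by
    intro x y
    have : (L * (1 - A)) x y = ∑ z, L x z * (1 - A) z y := Matrix.mul_apply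
    rw [this]
    split_ifs with hx
    · rw [← geom_sum_mul_neg A n, Matrix.mul_apply]
      simp [L, hx]
    · simp only [L, Matrix.of_apply, if_neg hx]
      rw [← Matrix.mul_apply, one_mul]
  have hdet : (1 - A).det = (L * (1 - A)).det := by rw [Matrix.det_mul, hL, one_mul]
  rw [hdet, Matrix.det_eq_prod_diag_of_gt (L * (1 - A)) b]
  · refine Finset.prod_congr rfl fun x _ => ?_
    rw [hrow]
    split_ifs with hx
    · rw [Matrix.sub_apply, weightedShift_pow_apply, hper x hx, if_pos rfl, hs x hx,
        Matrix.one_apply_eq]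
    · have : x ≠ r x := fun h => (hdesc x hx).ne (by rw [← h])
      simp [hA, this]
  · intro x y hxy hne
    rw [hrow] at hne
    split_ifs at hne with hx
    · rw [Matrix.sub_apply, weightedShift_pow_apply, hper x hx, Matrix.one_apply_ne hxy,
        if_neg hxy.symm, sub_zero] at hne
      exact absurd rfl hne
    · rw [Matrix.sub_apply, Matrix.one_apply_ne hxy] at hne
      by_cases hy : y = r x
      · rw [hy]
        exact hdesc x hx
      · simp [hA, hy] at hne

end Determinants

lemma Matrix.det_blockDiagonal_sigma {o R : Type*} {m : o → Type*} [Fintype o] [DecidableEq o]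
    [∀ a, Fintype (m a)] [∀ a, DecidableEq (m a)] [CommRing R] (B : ∀ a, Matrix (m a) (m a) R) :
    (Matrix.blockDiagonal' B).det = ∏ a, (B a).det := by
  let e := Fintype.equivFin o
  have htri : (Matrix.blockDiagonal' B).BlockTriangular fun x => e x.1 := by
    rintro ⟨a, u⟩ ⟨b, v⟩ h
    exact Matrix.blockDiagonal'_apply_ne _ _ _ fun hab => h.ne (congrArg e hab.symm)
  rw [htri.det_fintype, ← e.prod_comp]
  refine Finset.prod_congr rfl fun a _ => ?_
  let f : m a ≃ {x : Σ a, m a // e x.1 = e a} :=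
    (Equiv.sigmaSubtype a).symm.trans (Equiv.subtypeEquivRight fun x => e.injective.eq_iff.symm)
  rw [← Matrix.det_submatrix_equiv_self f]
  congr 1
  ext u v
  exact Matrix.blockDiagonal'_apply_eq B a u v

namespace OrderingsOf

variable {α R : Type*} [CommRing R]

/-- Moving the first letter of a word to its end. -/
def rotate {J : Finset α} (w : OrderingsOf J) : OrderingsOf J :=
  ⟨w.1.rotate 1, mem_lists_of_perm w (List.rotate_perm _ _)⟩

lemma iterate_rotate_coe {J : Finset α} (w : OrderingsOf J) (k : ℕ) :
    (rotate^[k] w).1 = w.1.rotate k := by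
  induction k with
  | zero => simp
  | succ k ih => simp only [Function.iterate_succ_apply', rotate, ih, List.rotate_rotate]

lemma head_iterate_rotate {J : Finset α} (hJ : J.Nonempty) (w : OrderingsOf J) {k : ℕ}
    (hk : k < w.1.length) : (rotate^[k] w).1.head (ne_nil hJ _) = w.1[k] := by
  simp only [iterate_rotate_coe, List.head_eq_getElem, List.getElem_rotate, zero_add,
    Nat.mod_eq_of_lt hk]

variable [DecidableEq α]

lemma det_eq_prod_of_sigmaEquiv {J : Finset α}
    (e : (Σ a : J, OrderingsOf (J.erase a)) ≃ OrderingsOf J)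
    (A : Matrix (OrderingsOf J) (OrderingsOf J) R)
    (B : ∀ a : J, Matrix (OrderingsOf (J.erase a.1)) (OrderingsOf (J.erase a.1)) R)
    (hdiag : ∀ a u v, A (e ⟨a, u⟩) (e ⟨a, v⟩) = B a u v)
    (hoff : ∀ a b u v, a ≠ b → A (e ⟨a, u⟩) (e ⟨b, v⟩) = 0) :
    A.det = ∏ a, (B a).det := by
  rw [← Matrix.det_blockDiagonal_sigma, ← Matrix.det_submatrix_equiv_self e A]
  congr 1
  ext ⟨a, u⟩ ⟨b, v⟩
  by_cases h : a = b
  · subst h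
    rw [Matrix.blockDiagonal'_apply_eq, Matrix.submatrix_apply, hdiag]
  · rw [Matrix.blockDiagonal'_apply_ne _ _ _ h, Matrix.submatrix_apply, hoff _ _ _ _ h]

lemma idxOf_eq_zero_iff {J : Finset α} (hJ : J.Nonempty) (w : OrderingsOf J) (a : α) :
    w.1.idxOf a = 0 ↔ w.1.head (ne_nil hJ w) = a := by
  obtain ⟨b, v, h⟩ := List.exists_cons_of_ne_nil (ne_nil hJ w)
  simp only [h, List.head_cons, List.idxOf_cons]
  by_cases hb : b = a
  · simp [hb]
  · simp [hb, beq_eq_false_iff_ne.2 hb]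

lemma idxOf_rotate_lt {J : Finset α} {a : α} (ha : a ∈ J) (w : OrderingsOf J)
    (h : w.1.idxOf a ≠ 0) : (rotate w).1.idxOf a < w.1.idxOf a := by
  obtain ⟨b, v, hw⟩ := List.exists_cons_of_ne_nil (ne_nil ⟨a, ha⟩ w)
  have hmem : a ∈ b :: v := hw ▸ w.mem_iff.2 ha
  have hba : b ≠ a := fun hba => h (by simp [hw, hba])
  have hv : a ∈ v := (List.mem_cons.1 hmem).resolve_left hba.symm
  simp only [rotate, hw, List.rotate_cons_succ, List.rotate_zero, List.idxOf_append_of_mem hv,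
    List.idxOf_cons_ne v hba]
  exact Nat.lt_succ_self _

lemma det_one_sub_rotate {J : Finset α} (hJ : J.Nonempty) (c : α → R) :
    (1 - Matrix.of fun w w' : OrderingsOf J =>
      if w' = rotate w then c (w.1.head (ne_nil hJ w)) else 0).det =
      (1 - ∏ x ∈ J, c x) ^ (J.card - 1).factorial := by
  obtain ⟨a, ha⟩ := hJ
  have hJ : J.Nonempty := ⟨a, ha⟩
  rw [det_one_sub_weightedShift rotate (fun w => c (w.1.head (ne_nil hJ w)))
    (fun w => w.1.idxOf a) J.card hJ.card_pos (∏ x ∈ J, c x) (fun w => idxOf_rotate_lt ha w)]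
  · rw [← (consEquiv hJ).prod_comp, Fintype.prod_sigma, Finset.prod_eq_single ⟨a, ha⟩]
    · simp [card_eq_factorial, Finset.card_erase_of_mem ha]
    · intro b _ hb
      have hb' : b.1 ≠ a := fun h => hb (Subtype.ext h)
      simp [List.idxOf_cons_ne _ hb']
    · simp
  · intro w hw k hk hkn
    rw [Ne, idxOf_eq_zero_iff hJ, head_iterate_rotate hJ w (w.length_eq ▸ hkn)]
    rw [idxOf_eq_zero_iff hJ, List.head_eq_getElem] at hw
    intro h
    rw [← hw, w.nodup.getElem_inj_iff] at h
    omega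
  · intro w _
    apply Subtype.ext
    rw [iterate_rotate_coe, ← w.length_eq, List.rotate_length]
  · intro w _
    rw [← w.prod_map, ← w.length_eq, Finset.prod_range, ← Fin.prod_univ_fun_getElem]
    exact Finset.prod_congr rfl fun i _ => by rw [head_iterate_rotate hJ w i.2]

end OrderingsOf

section Operators

variable {α R : Type*} [CommRing R]

/-- The matrix on `OrderingsOf J` of the linear operator sending each word `l` to `f l`. -/
def opMatrix (J : Finset α) (f : List α → (List α →₀ R)) :
    Matrix (OrderingsOf J) (OrderingsOf J) R :=
  Matrix.of fun w w' => f w.1 w'.1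

lemma opMatrix_linearCombination [DecidableEq α] (J : Finset α) (f g : List α → (List α →₀ R))
    (hf : ∀ l m, f l m ≠ 0 → m.Perm l) :
    opMatrix J (fun l => Finsupp.linearCombination R g (f l)) = opMatrix J f * opMatrix J g := by
  ext w w'
  simp only [opMatrix, Matrix.of_apply, Matrix.mul_apply]
  rw [Finsupp.linearCombination_apply, Finsupp.sum_apply, Finsupp.sum,
    ← Finset.sum_subtype J.val.lists.toFinset (fun _ => Multiset.mem_toFinset)
      fun m => f w.1 m * g m w'.1]
  refine Finset.sum_subset (fun m hm => ?_) (fun m _ hm => ?_)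
  · exact Multiset.mem_toFinset.2 <| w.mem_lists_of_perm (hf _ _ (Finsupp.mem_support_iff.1 hm))
  · rw [Finsupp.notMem_support_iff.1 hm]
    simp

/-- Prepending a letter to every word. -/
noncomputable def consL (a : α) : (List α →₀ R) →ₗ[R] (List α →₀ R) :=
  Finsupp.lmapDomain R R (List.cons a)

/-- Appending a letter to every word. -/
noncomputable def snocL (a : α) : (List α →₀ R) →ₗ[R] (List α →₀ R) :=
  Finsupp.lmapDomain R R (· ++ [a])

@[simp] lemma consL_single (a : α) (l : List α) (r : R) :
    consL a (Finsupp.single l r) = Finsupp.single (a :: l) r := by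
  simp [consL]

@[simp] lemma snocL_single (a : α) (l : List α) (r : R) :
    snocL a (Finsupp.single l r) = Finsupp.single (l ++ [a]) r := by
  simp [snocL]

lemma consL_apply_cons (a : α) (f : List α →₀ R) (l : List α) : consL a f (a :: l) = f l :=
  Finsupp.mapDomain_apply List.cons_injective f l

lemma consL_apply_of_ne {a : α} (f : List α →₀ R) {l : List α} (h : ∀ m, l ≠ a :: m) :
    consL a f l = 0 :=
  Finsupp.mapDomain_of_notMem_range f l fun ⟨m, hm⟩ => h m hm.symm

lemma snocL_apply_snoc (a : α) (f : List α →₀ R) (l : List α) : snocL a f (l ++ [a]) = f l :=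
  Finsupp.mapDomain_apply (List.append_left_injective [a]) f l

lemma snocL_apply_of_ne {a : α} (f : List α →₀ R) {l : List α} (h : ∀ m, l ≠ m ++ [a]) :
    snocL a f l = 0 :=
  Finsupp.mapDomain_of_notMem_range f l fun ⟨m, hm⟩ => h m hm.symm

lemma snocL_consL (a b : α) (f : List α →₀ R) : snocL b (consL a f) = consL a (snocL b f) := by
  simp only [snocL, consL, Finsupp.lmapDomain_apply, ← Finsupp.mapDomain_comp]
  rfl

/-- The operator acting on all letters but the first. -/
noncomputable def actTail (f : List α → (List α →₀ R)) : List α → (List α →₀ R)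
  | [] => Finsupp.single [] 1
  | a :: u => consL a (f u)

/-- The operator acting on all letters but the last. -/
noncomputable def actInit (f : List α → (List α →₀ R)) (l : List α) : List α →₀ R :=
  if h : l = [] then Finsupp.single [] 1 else snocL (l.getLast h) (f l.dropLast)

lemma actInit_snoc (f : List α → (List α →₀ R)) (u : List α) (a : α) :
    actInit f (u ++ [a]) = snocL a (f u) := by
  simp [actInit]

lemma perm_of_consL_apply_ne_zero {a : α} {f : List α →₀ R} {l m : List α}
    (hf : ∀ m, f m ≠ 0 → m.Perm l) (h : consL a f m ≠ 0) : m.Perm (a :: l) := by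
  by_cases hm : ∃ m', m = a :: m'
  · obtain ⟨m', rfl⟩ := hm
    rw [consL_apply_cons] at h
    exact (hf _ h).cons a
  · push Not at hm
    exact absurd (consL_apply_of_ne f hm) h

lemma det_actTail [DecidableEq α] {J : Finset α} (hJ : J.Nonempty)
    (f : List α → (List α →₀ R)) :
    (opMatrix J (actTail f)).det = ∏ a ∈ J, (opMatrix (J.erase a) f).det := by
  rw [OrderingsOf.det_eq_prod_of_sigmaEquiv (OrderingsOf.consEquiv hJ) _
    fun a => opMatrix (J.erase a.1) f, Finset.prod_coe_sort J fun a => (opMatrix (J.erase a) f).det]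
  · intro a u v
    simp [opMatrix, actTail, consL_apply_cons]
  · intro a b u v hab
    have hba : b.1 ≠ a.1 := fun h => hab (Subtype.ext h.symm)
    simp only [opMatrix, actTail, Matrix.of_apply, OrderingsOf.consEquiv_coe]
    exact consL_apply_of_ne _ fun m => by simp [hba]

lemma det_actInit [DecidableEq α] {J : Finset α} (hJ : J.Nonempty)
    (f : List α → (List α →₀ R)) :
    (opMatrix J (actInit f)).det = ∏ a ∈ J, (opMatrix (J.erase a) f).det := by
  rw [OrderingsOf.det_eq_prod_of_sigmaEquiv (OrderingsOf.snocEquiv hJ) _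
    fun a => opMatrix (J.erase a.1) f, Finset.prod_coe_sort J fun a => (opMatrix (J.erase a) f).det]
  · intro a u v
    simp [opMatrix, actInit_snoc, snocL_apply_snoc]
  · intro a b u v hab
    have hba : b.1 ≠ a.1 := fun h => hab (Subtype.ext h.symm)
    simp only [opMatrix, actInit_snoc, Matrix.of_apply, OrderingsOf.snocEquiv_coe]
    exact snocL_apply_of_ne _ fun m => by simp [hba]

end Operators

section Symmetrizer

variable {α R : Type*} [CommRing R] (q : α → α → R)

/-- The sum of all insertions of the letter `a` into a word, a factor `q a b` being collected
whenever `a` passes `b`. -/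
noncomputable def insertions (a : α) : List α → (List α →₀ R)
  | [] => Finsupp.single [a] 1
  | b :: v => Finsupp.single (a :: b :: v) 1 + q a b • consL b (insertions a v)

/-- The sum of all words obtained by moving the first letter to the right. -/
noncomputable def moveHead : List α → (List α →₀ R)
  | [] => Finsupp.single [] 1
  | a :: v => insertions q a v

/-- The sum of all rearrangements of a word, weighted by inversions. -/
noncomputable def symmetrizer : List α → (List α →₀ R)
  | [] => Finsupp.single [] 1
  | a :: u => Finsupp.linearCombination R (insertions q a) (symmetrizer u)

/-- Moving the first letter to the end. -/
noncomputable def headToEnd : List α → (List α →₀ R)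
  | [] => 0
  | a :: v => (v.map (q a)).prod • Finsupp.single (v ++ [a]) 1

/-- Moving the second letter across the first one and back, then to the end. -/
noncomputable def sndToEnd : List α → (List α →₀ R)
  | a :: b :: v => (q a b * (q b a * (v.map (q b)).prod)) • Finsupp.single (a :: (v ++ [b])) 1
  | _ => 0

lemma perm_of_insertions_apply_ne_zero (a : α) (v m : List α) (h : insertions q a v m ≠ 0) :
    m.Perm (a :: v) := by
  classical
  induction v generalizing m with
  | nil =>
    rw [insertions, Finsupp.single_apply_ne_zero] at h
    rw [h.1]
  | cons b v ih =>
    by_cases hm : m = a :: b :: v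
    · rw [hm]
    · rw [insertions, Finsupp.add_apply, Finsupp.single_eq_of_ne hm, zero_add,
        Finsupp.smul_apply] at h
      exact (perm_of_consL_apply_ne_zero ih (right_ne_zero_of_smul h)).trans
        (List.Perm.swap a b v)

lemma perm_of_moveHead_apply_ne_zero (l m : List α) (h : moveHead q l m ≠ 0) : m.Perm l := by
  cases l with
  | nil =>
    rw [moveHead, Finsupp.single_apply_ne_zero] at h
    rw [h.1]
  | cons a v => exact perm_of_insertions_apply_ne_zero q a v m h

lemma perm_of_linearCombination_apply_ne_zero {f g : List α → (List α →₀ R)}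
    (hf : ∀ l m, f l m ≠ 0 → m.Perm l) (hg : ∀ l m, g l m ≠ 0 → m.Perm l) (l m : List α)
    (h : Finsupp.linearCombination R g (f l) m ≠ 0) : m.Perm l := by
  rw [Finsupp.linearCombination_apply, Finsupp.sum_apply, Finsupp.sum] at h
  obtain ⟨k, hk, hne⟩ := Finset.exists_ne_zero_of_sum_ne_zero h
  rw [Finsupp.smul_apply] at hne
  exact (hg k m (right_ne_zero_of_smul hne)).trans (hf l k (Finsupp.mem_support_iff.1 hk))

lemma perm_of_actTail_apply_ne_zero {f : List α → (List α →₀ R)}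
    (hf : ∀ l m, f l m ≠ 0 → m.Perm l) (l m : List α) (h : actTail f l m ≠ 0) : m.Perm l := by
  cases l with
  | nil =>
    rw [actTail, Finsupp.single_apply_ne_zero] at h
    rw [h.1]
  | cons a u => exact perm_of_consL_apply_ne_zero (hf u) h

lemma symmetrizer_eq (l : List α) :
    symmetrizer q l = Finsupp.linearCombination R (moveHead q) (actTail (symmetrizer q) l) := by
  cases l with
  | nil => simp [symmetrizer, actTail, moveHead]
  | cons a u =>
    rw [symmetrizer, actTail, consL, Finsupp.lmapDomain_apply, Finsupp.linearCombination_mapDomain]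
    rfl

lemma perm_of_symmetrizer_apply_ne_zero (l m : List α) (h : symmetrizer q l m ≠ 0) :
    m.Perm l := by
  induction l generalizing m with
  | nil =>
    rw [symmetrizer, Finsupp.single_apply_ne_zero] at h
    rw [h.1]
  | cons a u ih =>
    rw [symmetrizer, Finsupp.linearCombination_apply, Finsupp.sum_apply, Finsupp.sum] at h
    obtain ⟨k, hk, hne⟩ := Finset.exists_ne_zero_of_sum_ne_zero h
    rw [Finsupp.smul_apply] at hne
    exact (perm_of_insertions_apply_ne_zero q a k m (right_ne_zero_of_smul hne)).trans
      ((ih k (Finsupp.mem_support_iff.1 hk)).cons a)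

lemma insertions_snoc (a c : α) (u : List α) :
    insertions q a (u ++ [c]) = snocL c (insertions q a u) +
      ((u ++ [c]).map (q a)).prod • Finsupp.single (u ++ [c] ++ [a]) 1 := by
  induction u with
  | nil => simp [insertions]
  | cons b u ih =>
    rw [List.cons_append, insertions, ih, insertions]
    simp only [map_add, map_smul, smul_add, snocL_single, consL_single, snocL_consL, smul_smul,
      List.map_cons, List.prod_cons, List.cons_append, add_assoc]

lemma moveHead_eq_actInit_add (a b : α) (v : List α) :
    moveHead q (a :: b :: v) = actInit (moveHead q) (a :: b :: v) + headToEnd q (a :: b :: v) := by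
  obtain ⟨u, c, hu⟩ := ((b :: v).eq_nil_or_concat').resolve_left (List.cons_ne_nil b v)
  rw [hu, ← List.cons_append, actInit_snoc, List.cons_append, moveHead, insertions_snoc]
  rfl

lemma linearCombination_headToEnd_consL (a b : α) (v : List α) :
    Finsupp.linearCombination R (headToEnd q) (consL b (insertions q a v)) =
      (q b a * (v.map (q b)).prod) • snocL b (insertions q a v) := by
  rw [consL, Finsupp.lmapDomain_apply, Finsupp.linearCombination_mapDomain,
    Finsupp.linearCombination_apply, snocL, Finsupp.lmapDomain_apply, Finsupp.mapDomain,
    Finsupp.smul_sum]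
  refine Finset.sum_congr rfl fun m hm => ?_
  have hperm := perm_of_insertions_apply_ne_zero q a v m (Finsupp.mem_support_iff.1 hm)
  simp only [Function.comp_apply, headToEnd, (hperm.map (q b)).prod_eq, List.map_cons,
    List.prod_cons, Finsupp.smul_single, smul_eq_mul, mul_one, mul_comm]

lemma moveHead_sub_headToEnd (a b : α) (v : List α) :
    moveHead q (a :: b :: v) -
        Finsupp.linearCombination R (headToEnd q) (moveHead q (a :: b :: v)) =
      actInit (moveHead q) (a :: b :: v) -
        Finsupp.linearCombination R (actInit (moveHead q)) (sndToEnd q (a :: b :: v)) := by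
  have h₁ : Finsupp.linearCombination R (headToEnd q) (moveHead q (a :: b :: v)) =
      headToEnd q (a :: b :: v) +
        (q a b * (q b a * (v.map (q b)).prod)) • snocL b (insertions q a v) := by
    rw [moveHead, insertions, map_add, map_smul, linearCombination_headToEnd_consL, smul_smul,
      Finsupp.linearCombination_single, one_smul]
  have h₂ : Finsupp.linearCombination R (actInit (moveHead q)) (sndToEnd q (a :: b :: v)) =
      (q a b * (q b a * (v.map (q b)).prod)) • snocL b (insertions q a v) := by
    rw [sndToEnd, map_smul, Finsupp.linearCombination_single, one_smul, ← List.cons_append,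
      actInit_snoc, moveHead]
  rw [h₁, h₂, moveHead_eq_actInit_add]
  abel

lemma perm_of_sndToEnd_apply_ne_zero (l m : List α) (h : sndToEnd q l m ≠ 0) : m.Perm l := by
  match l with
  | [] => exact absurd rfl h
  | [_] => exact absurd rfl h
  | a :: b :: v =>
    rw [sndToEnd, Finsupp.smul_apply] at h
    rw [((Finsupp.single_apply_ne_zero).1 (right_ne_zero_of_smul h)).1]
    exact (List.perm_append_singleton b v).cons a

variable [DecidableEq α]

lemma moveHead_mul_one_sub {J : Finset α} (hJ : 2 ≤ J.card) :
    opMatrix J (moveHead q) * (1 - opMatrix J (headToEnd q)) =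
      (1 - opMatrix J (sndToEnd q)) * opMatrix J (actInit (moveHead q)) := by
  rw [mul_sub, sub_mul, mul_one, one_mul,
    ← opMatrix_linearCombination J _ _ (perm_of_moveHead_apply_ne_zero q),
    ← opMatrix_linearCombination J _ _ (perm_of_sndToEnd_apply_ne_zero q)]
  ext w w'
  have hw := w.length_eq
  obtain ⟨l, hl⟩ := w
  match l with
  | [] => simp at hw; omega
  | [_] => simp at hw; omega
  | a :: b :: v => exact DFunLike.congr_fun (moveHead_sub_headToEnd q a b v) w'.1

lemma det_symmetrizer {J : Finset α} (hJ : J.Nonempty) :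
    (opMatrix J (symmetrizer q)).det =
      (∏ a ∈ J, (opMatrix (J.erase a) (symmetrizer q)).det) * (opMatrix J (moveHead q)).det := by
  rw [← det_actTail hJ, ← Matrix.det_mul, ← opMatrix_linearCombination J _ _
    (perm_of_actTail_apply_ne_zero (perm_of_symmetrizer_apply_ne_zero q))]
  congr 2
  exact funext (symmetrizer_eq q)

/-- The product of `q s t` over all ordered pairs of distinct elements of `K`. -/
def offDiagProd (K : Finset α) : R := ∏ a ∈ K, ∏ b ∈ K.erase a, q a b

lemma offDiagProd_eq_erase {K : Finset α} {a : α} (ha : a ∈ K) :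
    offDiagProd q K =
      ∏ b ∈ K.erase a, q a b * (q b a * ∏ x ∈ (K.erase a).erase b, q b x) := by
  rw [offDiagProd, ← Finset.mul_prod_erase K _ ha, ← Finset.prod_mul_distrib]
  refine Finset.prod_congr rfl fun b hb => ?_
  have hab : a ∈ K.erase b := Finset.mem_erase.2 ⟨(Finset.ne_of_mem_erase hb).symm, ha⟩
  rw [Finset.erase_right_comm, Finset.mul_prod_erase (K.erase b) _ hab]

lemma det_one_sub_headToEnd {J : Finset α} (hJ : J.Nonempty) :
    (1 - opMatrix J (headToEnd q)).det = (1 - offDiagProd q J) ^ (J.card - 1).factorial := by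
  rw [offDiagProd, ← OrderingsOf.det_one_sub_rotate hJ]
  congr 2
  ext w w'
  obtain ⟨a, v, hw⟩ := List.exists_cons_of_ne_nil (w.ne_nil hJ)
  obtain ⟨_, hv⟩ := OrderingsOf.mem_erase_of_cons (hw ▸ w.2)
  have hrot : (OrderingsOf.rotate w).1 = v ++ [a] := by simp [OrderingsOf.rotate, hw]
  have hprod := OrderingsOf.prod_map ⟨v, hv⟩ (q a)
  simp only [opMatrix, Matrix.of_apply, hw, headToEnd, hprod, Finsupp.smul_apply,
    Finsupp.single_apply, Subtype.ext_iff, hrot, List.head_cons, @eq_comm _ (v ++ [a])]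
  simp

lemma det_one_sub_sndToEnd {J : Finset α} (hJ : 2 ≤ J.card) :
    (1 - opMatrix J (sndToEnd q)).det =
      (1 - offDiagProd q J) ^ (J.card * (J.card - 2).factorial) := by
  have hne : J.Nonempty := Finset.card_pos.1 (by omega)
  have hcard (a : J) : (J.erase a.1).card = J.card - 1 := Finset.card_erase_of_mem a.2
  have hne' (a : J) : (J.erase a.1).Nonempty := Finset.card_pos.1 (by rw [hcard]; omega)
  rw [OrderingsOf.det_eq_prod_of_sigmaEquiv (OrderingsOf.consEquiv hne) _ fun a =>
    1 - Matrix.of fun w w' : OrderingsOf (J.erase a.1) =>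
      if w' = OrderingsOf.rotate w then
        (fun b => q a b * (q b a * ∏ x ∈ (J.erase a.1).erase b, q b x))
          (w.1.head (w.ne_nil (hne' a)))
      else 0]
  · have hdet (a : J) := OrderingsOf.det_one_sub_rotate (hne' a)
      fun b => q a b * (q b a * ∏ x ∈ (J.erase a.1).erase b, q b x)
    simp only [← offDiagProd_eq_erase q (Subtype.coe_prop _), hcard, Nat.sub_sub] at hdet
    rw [Finset.prod_congr rfl fun a _ => hdet a]
    simp [← pow_mul, mul_comm]
  · intro a w w'
    obtain ⟨b, v, hw⟩ := List.exists_cons_of_ne_nil (w.ne_nil (hne' a))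
    obtain ⟨_, hv⟩ := OrderingsOf.mem_erase_of_cons (hw ▸ w.2)
    have hrot : (OrderingsOf.rotate w).1 = v ++ [b] := by simp [OrderingsOf.rotate, hw]
    have hprod := OrderingsOf.prod_map ⟨v, hv⟩ (q b)
    simp only [opMatrix, Matrix.sub_apply, Matrix.one_apply, Matrix.of_apply, sndToEnd, hprod,
      Finsupp.smul_apply, OrderingsOf.consEquiv_coe, hw,
      Finsupp.single_apply, Subtype.ext_iff, hrot, List.head_cons]
    simp [@eq_comm _ (v ++ [b])]
  · intro a b u v hab
    have hba : a.1 ≠ b.1 := fun h => hab (Subtype.ext h)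
    obtain ⟨c, u', hu⟩ := List.exists_cons_of_ne_nil (u.ne_nil (hne' a))
    simp [opMatrix, hab, hba, hu, sndToEnd]

end Symmetrizer

section ProductFormula

variable {α R : Type*} [CommRing R] (q : α → α → R)

lemma filter_powerset_eq_empty {J : Finset α} (hJ : J.card ≤ 1) :
    J.powerset.filter (fun K => 2 ≤ K.card) = ∅ := by
  refine Finset.filter_eq_empty_iff.2 fun K hK => ?_
  have := Finset.card_le_card (Finset.mem_powerset.1 hK)
  omega

variable [DecidableEq α]

lemma prod_prod_powerset_erase (J : Finset α) (F : Finset α → R) :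
    ∏ a ∈ J, ∏ K ∈ (J.erase a).powerset, F K = ∏ K ∈ J.powerset, F K ^ (J.card - K.card) := by
  rw [Finset.prod_comm' (t' := J.powerset) (s' := fun K => J \ K)]
  · refine Finset.prod_congr rfl fun K hK => ?_
    rw [Finset.prod_const, Finset.card_sdiff_of_subset (Finset.mem_powerset.1 hK)]
  · intro a K
    simp only [Finset.mem_powerset, Finset.mem_sdiff, Finset.subset_erase]
    tauto

/-- Multiplying over all `a ∈ J` a product over the subsets of `J.erase a` counts each `K ⊆ J`
exactly `J.card - K.card` times. -/
lemma prod_powerset_pow_mul (J : Finset α) (X : Finset α → R) (e c d : ℕ → ℕ → ℕ)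
    (h : ∀ k ≤ J.card, 2 ≤ k → e (J.card - 1) k * (J.card - k) + d J.card k = c J.card k) :
    (∏ a ∈ J, ∏ K ∈ (J.erase a).powerset with 2 ≤ K.card, X K ^ e (J.erase a).card K.card) *
      ∏ K ∈ J.powerset with 2 ≤ K.card, X K ^ d J.card K.card =
    ∏ K ∈ J.powerset with 2 ≤ K.card, X K ^ c J.card K.card := by
  have herase : ∀ a ∈ J,
      ∏ K ∈ (J.erase a).powerset with 2 ≤ K.card, X K ^ e (J.erase a).card K.card =
        ∏ K ∈ (J.erase a).powerset, if 2 ≤ K.card then X K ^ e (J.card - 1) K.card else 1 := by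
    intro a ha
    rw [Finset.prod_filter, Finset.card_erase_of_mem ha]
  rw [Finset.prod_congr rfl herase, prod_prod_powerset_erase, Finset.prod_filter,
    Finset.prod_filter, ← Finset.prod_mul_distrib]
  refine Finset.prod_congr rfl fun K hK => ?_
  split_ifs with h2
  · rw [← pow_mul, ← pow_add, h _ (Finset.card_le_card (Finset.mem_powerset.1 hK)) h2]
  · simp

lemma det_opMatrix_of_card_le_one {J : Finset α} (hJ : J.card ≤ 1) (f : List α → (List α →₀ R))
    (hnil : f [] [] = 1) (hsing : ∀ a, f [a] [a] = 1) : (opMatrix J f).det = 1 := by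
  have hcard : Fintype.card (OrderingsOf J) = 1 := by
    rw [OrderingsOf.card_eq_factorial, Nat.factorial_eq_one.2 hJ]
  obtain ⟨w, -⟩ := Fintype.card_eq_one_iff.1 hcard
  rw [Matrix.det_eq_elem_of_card_eq_one hcard w]
  have hw := w.length_eq
  obtain ⟨l, hl⟩ := w
  match l with
  | [] => exact hnil
  | [a] => exact hsing a
  | a :: b :: v => simp at hw; omega

lemma det_moveHead [IsDomain R] (J : Finset α)
    (hX : ∀ K ⊆ J, 2 ≤ K.card → offDiagProd q K ≠ 1) :
    (opMatrix J (moveHead q)).det = ∏ K ∈ J.powerset with 2 ≤ K.card,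
      (1 - offDiagProd q K) ^ ((K.card - 2).factorial * (J.card - K.card).factorial) := by
  induction hn : J.card using Nat.strong_induction_on generalizing J with
  | _ n ih =>
    subst hn
    by_cases hJ : J.card ≤ 1
    · rw [filter_powerset_eq_empty hJ, Finset.prod_empty,
        det_opMatrix_of_card_le_one hJ _ (by simp [moveHead])
          (by simp [moveHead, insertions])]
    · push Not at hJ
      have hne : J.Nonempty := Finset.card_pos.1 (by omega)
      have hdet := congrArg Matrix.det (moveHead_mul_one_sub q hJ)
      rw [Matrix.det_mul, Matrix.det_mul, det_one_sub_headToEnd q hne, det_one_sub_sndToEnd q hJ,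
        det_actInit hne, Finset.prod_congr rfl fun a ha => ih _ (Finset.card_erase_lt_of_mem ha)
          (J.erase a) (fun K hK => hX K (hK.trans (Finset.erase_subset a J))) rfl] at hdet
      have hfac : J.card * (J.card - 2).factorial =
          (J.card - 1).factorial + (J.card - 2).factorial := by
        obtain ⟨m, hm⟩ := Nat.exists_eq_add_of_le' hJ
        rw [hm, Nat.add_sub_cancel, show m + 2 - 1 = m + 1 from rfl, Nat.factorial_succ]
        ring
      have hne0 : (1 - offDiagProd q J) ^ (J.card - 1).factorial ≠ 0 :=
        pow_ne_zero _ (sub_ne_zero.2 (hX J subset_rfl hJ).symm)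
      have hlast : ∏ K ∈ J.powerset with 2 ≤ K.card,
          (1 - offDiagProd q K) ^ (if K.card = J.card then (J.card - 2).factorial else 0) =
            (1 - offDiagProd q J) ^ (J.card - 2).factorial := by
        rw [Finset.prod_eq_single_of_mem J (by simpa using Nat.succ_le_of_lt hJ), if_pos rfl]
        intro K hK hKJ
        rw [if_neg, pow_zero]
        exact fun h => hKJ (Finset.eq_of_subset_of_card_le
          (Finset.mem_powerset.1 (Finset.mem_filter.1 hK).1) h.ge)
      rw [hfac, pow_add, mul_comm, mul_assoc] at hdet
      rw [mul_left_cancel₀ hne0 hdet, ← hlast, mul_comm]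
      refine prod_powerset_pow_mul J _ (fun n k => (k - 2).factorial * (n - k).factorial)
        (fun n k => (k - 2).factorial * (n - k).factorial)
        (fun n k => if k = n then (n - 2).factorial else 0) fun k hk _ => ?_
      split_ifs with hkn
      · simp [hkn]
      · rw [show J.card - k = J.card - 1 - k + 1 by omega, Nat.factorial_succ]
        ring

lemma det_symmetrizer_eq_prod [IsDomain R] (J : Finset α)
    (hX : ∀ K ⊆ J, 2 ≤ K.card → offDiagProd q K ≠ 1) :
    (opMatrix J (symmetrizer q)).det = ∏ K ∈ J.powerset with 2 ≤ K.card,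
      (1 - offDiagProd q K) ^ ((K.card - 2).factorial * (J.card - K.card + 1).factorial) := by
  induction hn : J.card using Nat.strong_induction_on generalizing J with
  | _ n ih =>
    subst hn
    by_cases hJ : J.card ≤ 1
    · rw [filter_powerset_eq_empty hJ, Finset.prod_empty,
        det_opMatrix_of_card_le_one hJ _ (by simp [symmetrizer])
          (by simp [symmetrizer, insertions])]
    · push Not at hJ
      rw [det_symmetrizer q (Finset.card_pos.1 (by omega)), det_moveHead q J hX,
        Finset.prod_congr rfl fun a ha => ih _ (Finset.card_erase_lt_of_mem ha)
          (J.erase a) (fun K hK => hX K (hK.trans (Finset.erase_subset a J))) rfl]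
      refine prod_powerset_pow_mul J _ (fun n k => (k - 2).factorial * (n - k + 1).factorial)
        (fun n k => (k - 2).factorial * (n - k + 1).factorial)
        (fun n k => (k - 2).factorial * (n - k).factorial) fun k hk _ => ?_
      obtain hkn | hkn := hk.eq_or_lt
      · simp [hkn]
      · rw [show J.card - k = J.card - 1 - k + 1 by omega, Nat.factorial_succ (_ + 1)]
        ring

end ProductFormula

section Entries

variable {α R : Type*} [CommRing R] (q : α → α → R)

/-- The product of `g` over all pairs of letters in a word, in order of occurrence. -/
def pairProd (g : α → α → R) : List α → R
  | [] => 1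
  | a :: u => (u.map (g a)).prod * pairProd g u

lemma pairProd_congr {g g' : α → α → R} {l : List α}
    (h : ∀ x ∈ l, ∀ y ∈ l, g x y = g' x y) : pairProd g l = pairProd g' l := by
  induction l with
  | nil => rfl
  | cons a u ih =>
    rw [pairProd, pairProd, ih fun x hx y hy => h x (by simp [hx]) y (by simp [hy]),
      List.map_congr_left fun y hy => h a (by simp) y (by simp [hy])]

lemma pairProd_ofFn (g : α → α → R) {n : ℕ} (f : Fin n → α) :
    pairProd g (List.ofFn f) = ∏ p : Fin n × Fin n with p.1 < p.2, g (f p.1) (f p.2) := by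
  rw [Finset.prod_filter, Fintype.prod_prod_type]
  induction n with
  | zero => simp [pairProd]
  | succ n ih =>
    rw [List.ofFn_succ, pairProd, ih, Fin.prod_univ_succ]
    simp [Fin.prod_univ_succ, List.map_ofFn, List.prod_ofFn]

variable [DecidableEq α]

lemma idxOf_append_cons {a x : α} {s t : List α} (hx : a ≠ x) :
    (s ++ a :: t).idxOf x =
      if x ∈ s then s.idxOf x else s.length + (t.idxOf x + 1) := by
  split_ifs with h
  · exact List.idxOf_append_of_mem h
  · rw [List.idxOf_append_of_notMem h, List.idxOf_cons_ne t hx]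

lemma insertions_apply {a : α} {v s t : List α} (hv : a ∉ v) :
    insertions q a v (s ++ a :: t) = if v = s ++ t then (s.map (q a)).prod else 0 := by
  induction v generalizing s with
  | nil =>
    cases s with
    | nil => simp [insertions, Finsupp.single_apply, List.nil_eq]
    | cons c s => simp [insertions]
  | cons b v ih =>
    have hab : a ≠ b := fun h => hv (by simp [h])
    have hav : a ∉ v := fun h => hv (by simp [h])
    cases s with
    | nil =>
      rw [insertions, Finsupp.add_apply, Finsupp.smul_apply, List.nil_append,
        consL_apply_of_ne _ (by simp [hab])]
      simp [Finsupp.single_apply]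
    | cons c s =>
      have hne : a :: b :: v ≠ c :: s ++ a :: t := by
        intro h
        have := (List.cons.inj h).2 ▸ hv
        simp at this
      rw [insertions, Finsupp.add_apply, Finsupp.single_eq_of_ne hne.symm, zero_add,
        Finsupp.smul_apply]
      by_cases hcb : c = b
      · subst hcb
        rw [List.cons_append, consL_apply_cons, ih hav]
        simp
      · rw [consL_apply_of_ne _ (by simp [hcb])]
        simp [Ne.symm hcb]

lemma symmetrizer_apply {l m : List α} (hl : l.Nodup) (hlm : m.Perm l) :
    symmetrizer q l m =
      pairProd (fun x y => if m.idxOf y < m.idxOf x then q x y else 1) l := by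
  induction l generalizing m with
  | nil => simp [symmetrizer, pairProd, hlm.eq_nil]
  | cons a u ih =>
    obtain ⟨s, t, rfl⟩ := List.append_of_mem (hlm.mem_iff.2 List.mem_cons_self)
    have hau : a ∉ u := (List.nodup_cons.1 hl).1
    have hperm : (s ++ t).Perm u := (List.perm_cons a).1 (List.perm_middle.symm.trans hlm)
    have hnodup : (s ++ t).Nodup := hperm.nodup_iff.2 (List.nodup_cons.1 hl).2
    have has : a ∉ s ++ t := fun h => hau (hperm.mem_iff.1 h)
    rw [symmetrizer, Finsupp.linearCombination_apply, Finsupp.sum_apply,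
      Finsupp.sum_eq_single (s ++ t)]
    · rw [Finsupp.smul_apply, insertions_apply q has, if_pos rfl, ih (List.nodup_cons.1 hl).2 hperm,
        pairProd, smul_eq_mul, mul_comm]
      congr 1
      · have hidx : (s ++ a :: t).idxOf a = s.length := by
          rw [List.idxOf_append_of_notMem fun h => has (by simp [h]), List.idxOf_cons_self,
            add_zero]
        rw [← (hperm.map _).prod_eq, List.map_append, List.prod_append,
          List.prod_eq_one (l := t.map _), mul_one]
        · refine congrArg List.prod (List.map_congr_left fun y hy => ?_)
          rw [hidx, List.idxOf_append_of_mem hy, if_pos (List.idxOf_lt_length_of_mem hy)]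
        · intro z hz
          obtain ⟨y, hy, rfl⟩ := List.mem_map.1 hz
          have hay : a ≠ y := fun h => has (by simp [h, hy])
          rw [hidx, idxOf_append_cons hay,
            if_neg fun h => (List.nodup_append.1 hnodup).2.2 y h y hy rfl, if_neg (by omega)]
      · refine pairProd_congr fun x hx y hy => if_congr ?_ rfl rfl
        rw [idxOf_append_cons (ne_of_mem_of_not_mem hx hau).symm,
          idxOf_append_cons (ne_of_mem_of_not_mem hy hau).symm,
          List.idxOf_append, List.idxOf_append]
        split_ifs with h₁ h₂ h₂
        · rfl
        · have := List.idxOf_lt_length_of_mem h₁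
          omega
        · have := List.idxOf_lt_length_of_mem h₂
          omega
        · omega
    · intro k hk hne
      rw [Finsupp.smul_apply, insertions_apply, if_neg hne, smul_zero]
      exact fun h => hau ((perm_of_symmetrizer_apply_ne_zero q u k hk).mem_iff.1 h)
    · simp

/-- Enumerations of `J` and words with letters `J` are the same thing. -/
noncomputable def wordEquiv (J : Finset α) :
    (Fin J.card ≃ {x : α // x ∈ J}) ≃ OrderingsOf J :=
  Equiv.ofBijective
    (fun w => ⟨List.ofFn fun i => (w i : α), mem_lists_iff_coe.2 <| by
      refine (Multiset.Nodup.ext ?_ J.nodup).2 fun x => ?_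
      · exact Multiset.coe_nodup.2
          (List.nodup_ofFn.2 (Subtype.val_injective.comp w.injective))
      · rw [Multiset.mem_coe, List.mem_ofFn, Finset.mem_val]
        constructor
        · rintro ⟨i, rfl⟩
          exact (w i).2
        · exact fun hx => ⟨w.symm ⟨x, hx⟩, by simp⟩⟩) <| by
    rw [Fintype.bijective_iff_injective_and_card]
    constructor
    · intro w w' h
      ext i
      exact congrFun (List.ofFn_injective (Subtype.ext_iff.1 h)) i
    · rw [OrderingsOf.card_eq_factorial, Fintype.card_equiv J.equivFin.symm, Fintype.card_fin]

lemma wordEquiv_coe {J : Finset α} (w : Fin J.card ≃ {x : α // x ∈ J}) :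
    (wordEquiv J w).1 = List.ofFn fun i => (w i : α) := rfl

lemma idxOf_wordEquiv {J : Finset α} (w : Fin J.card ≃ {x : α // x ∈ J}) (x : {x : α // x ∈ J}) :
    (wordEquiv J w).1.idxOf (x : α) = w.symm x := by
  have h := List.Nodup.idxOf_getElem (wordEquiv J w).nodup (w.symm x)
    (by rw [OrderingsOf.length_eq]; exact (w.symm x).2)
  simpa [wordEquiv_coe] using h

lemma opMatrix_symmetrizer_wordEquiv {J : Finset α} (w w' : Fin J.card ≃ {x : α // x ∈ J}) :
    opMatrix J (symmetrizer q) (wordEquiv J w) (wordEquiv J w') =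
      ∏ p : Fin J.card × Fin J.card with p.1 < p.2 ∧ w'.symm (w p.2) < w'.symm (w p.1),
        q (w p.1) (w p.2) := by
  rw [opMatrix, Matrix.of_apply, symmetrizer_apply q (OrderingsOf.nodup _)
    (OrderingsOf.perm _ _), wordEquiv_coe w, pairProd_ofFn, ← Finset.filter_filter,
    Finset.prod_filter (fun p : Fin J.card × Fin J.card => w'.symm (w p.2) < w'.symm (w p.1))]
  simp only [idxOf_wordEquiv, Fin.val_fin_lt]

end Entries

lemma offDiagProd_eq_prod_lt {α R : Type*} [LinearOrder α] [CommRing R] (q : α → α → R)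
    (K : Finset α) :
    offDiagProd q K = ∏ p ∈ (K ×ˢ K).filter (fun p => p.1 < p.2), q p.1 p.2 * q p.2 p.1 := by
  have herase (a : α) : ∏ b ∈ K.erase a, q a b =
      ∏ b ∈ K, (if a < b then q a b else 1) * if b < a then q a b else 1 := by
    rw [← Finset.filter_ne, Finset.prod_filter]
    refine Finset.prod_congr rfl fun b _ => ?_
    obtain h | h | h := lt_trichotomy a b
    · simp [h, h.ne, h.not_gt]
    · simp [h]
    · simp [h, h.ne', h.not_gt]
  rw [offDiagProd, Finset.prod_congr rfl fun a _ => herase a, Finset.prod_filter,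
    Finset.prod_product]
  simp only [Finset.prod_mul_distrib]
  rw [Finset.prod_comm (f := fun a b => if b < a then q a b else 1)]
  simp only [← Finset.prod_mul_distrib]
  refine Finset.prod_congr rfl fun a _ => Finset.prod_congr rfl fun b _ => ?_
  split_ifs <;> simp

lemma offDiagProd_qJ_ne_one (J K : Finset ℕ+) (hK : 2 ≤ K.card) :
    offDiagProd (qJ J) K ≠ 1 := by
  intro h
  obtain ⟨a, ha, b, hb, hab⟩ := Finset.one_lt_card.1 hK
  have hq : MvPolynomial.constantCoeff (qJ J a b) = 0 := by
    rw [qJ]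
    split_ifs <;> simp
  have h0 : MvPolynomial.constantCoeff (offDiagProd (qJ J) K) = 0 := by
    rw [offDiagProd, map_prod]
    refine Finset.prod_eq_zero ha ?_
    rw [map_prod]
    exact Finset.prod_eq_zero (Finset.mem_erase.2 ⟨hab.symm, hb⟩) hq
  rw [h, map_one] at h0
  exact one_ne_zero h0

theorem det_MJ (J : Finset ℕ+) (hn : 2 ≤ J.card) :
    Matrix.det (Matrix.of
        fun w w' : Fin J.card ≃ {x : ℕ+ // x ∈ J} =>
          ∏ p ∈ Finset.univ.filter
              (fun p : Fin J.card × Fin J.card =>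
                p.1 < p.2 ∧ w'.symm (w p.2) < w'.symm (w p.1)),
            qJ J (w p.1 : ℕ+) (w p.2 : ℕ+)) =
      ∏ K ∈ J.powerset.filter (fun K => 2 ≤ K.card),
        (1 - ∏ p ∈ (K ×ˢ K).filter (fun p : ℕ+ × ℕ+ => p.1 < p.2),
              qJ J p.1 p.2 * qJ J p.2 p.1)
          ^ ((K.card - 2).factorial * (J.card - K.card + 1).factorial) := by
  simp only [← offDiagProd_eq_prod_lt]
  rw [← det_symmetrizer_eq_prod (qJ J) J fun K _ hK => offDiagProd_qJ_ne_one J K hK,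
    ← Matrix.det_submatrix_equiv_self (wordEquiv J)]
  congr 1
  ext1 w w'
  exact (opMatrix_symmetrizer_wordEquiv (qJ J) w w').symm
end

section
/- Let n ≥ 2 be an integer and q a single polynomial indeterminate over ℤ. Let M be the n!×n! matrix, indexed by permutations σ, τ of {1,…,n}, whose (σ,τ) entry is q^{ι(σ,τ)}, where ι(σ,τ) = #{(i,j) : 1 ≤ i < j ≤ n and τ⁻¹(σ(i)) > τ⁻¹(σ(j))}. Then det M = ∏_{k=2}^{n} (1 − q^{k(k−1)})^{\binom{n}{k}·(k−2)!·(n−k+1)!} in ℤ[q]. -/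
/-- The number of inversions `ι(σ,τ) = #{(i,j) : i < j and τ⁻¹(σ(i)) > τ⁻¹(σ(j))}`. -/
def inv_count {n : ℕ} (σ τ : Equiv.Perm (Fin n)) : ℕ :=
  (Finset.univ.filter
      (fun p : Fin n × Fin n => p.1 < p.2 ∧ τ⁻¹ (σ p.2) < τ⁻¹ (σ p.1))).card

open Polynomial in
theorem one_sub_X_pow_ne_zero {m : ℕ} (hm : 0 < m) : (1 - X ^ m : ℤ[X]) ≠ 0 := by
  intro h
  have := congrArg (eval 0) h
  simp [hm.ne'] at this

section GroupDet

variable {R G H : Type*} [CommRing R] [Group G] [Fintype G] [DecidableEq G]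
  [Group H] [Fintype H] [DecidableEq H]

/-- The group determinant of `f : G → R`. -/
def groupDet (f : G → R) : R :=
  Matrix.det (Matrix.of fun σ τ : G => f (τ⁻¹ * σ))

theorem groupDet_coeff_mul (a b : MonoidAlgebra R G) :
    groupDet (a * b).coeff = groupDet a.coeff * groupDet b.coeff := by
  rw [groupDet, groupDet, groupDet, mul_comm, ← Matrix.det_mul]
  congr 1
  ext σ τ
  rw [Matrix.mul_apply, Matrix.of_apply, MonoidAlgebra.coeff_mul_apply_left,
    Finsupp.sum_fintype _ _ (by simp)]
  refine Fintype.sum_equiv (Equiv.mulLeft τ) _ _ fun ρ => ?_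
  simp [mul_comm, mul_assoc]

theorem groupDet_eq_pow_of_injective (φ : H →* G) (hφ : Function.Injective φ) (f : G → R)
    (hf : ∀ g, g ∉ φ.range → f g = 0) :
    groupDet f = groupDet (f ∘ φ) ^ (Fintype.card G / Fintype.card H) := by
  classical
  let e : H × (G ⧸ φ.range) → G := fun x => x.2.out * φ x.1
  have hmk : ∀ x, (QuotientGroup.mk (e x) : G ⧸ φ.range) = x.2 := fun x => by
    rw [QuotientGroup.mk_mul_of_mem _ (MonoidHom.mem_range.2 ⟨x.1, rfl⟩), QuotientGroup.out_eq']
  have he : Function.Bijective e := by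
    constructor
    · rintro ⟨h, L⟩ ⟨h', L'⟩ hx
      have hL : L = L' := (hmk (h, L)).symm.trans ((congrArg _ hx).trans (hmk (h', L')))
      subst hL
      simpa [e, hφ.eq_iff] using hx
    · intro g
      obtain ⟨⟨_, h, rfl⟩, hh⟩ := QuotientGroup.mk_out_eq_mul φ.range g
      exact ⟨(h⁻¹, (g : G ⧸ φ.range)), by simp [e, hh]⟩
  have hcard : Fintype.card G / Fintype.card H = Fintype.card (G ⧸ φ.range) := by
    rw [← Fintype.card_of_bijective he, Fintype.card_prod,
      Nat.mul_div_cancel_left _ Fintype.card_pos]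
  rw [hcard, groupDet, ← Matrix.det_submatrix_equiv_self (Equiv.ofBijective e he), groupDet]
  trans (Matrix.blockDiagonal fun _ : G ⧸ φ.range =>
    Matrix.of fun σ τ : H => (f ∘ φ) (τ⁻¹ * σ)).det
  · congr 1
    ext ⟨h, L⟩ ⟨h', L'⟩
    rw [Matrix.blockDiagonal_apply]
    split_ifs with hL
    · obtain rfl : L = L' := hL
      simp [e, mul_assoc]
    · refine hf _ fun hmem => hL ?_
      have := QuotientGroup.eq.2 hmem
      simp only [Equiv.ofBijective_apply, hmk] at this
      exact this.symm
  · rw [Matrix.det_blockDiagonal, Finset.prod_const, Finset.card_univ]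

/-- The determinant of `1 - y P`, with `P` the matrix of a cyclic shift. -/
theorem det_one_sub_cyclic_shift (m : ℕ) (y : R) :
    Matrix.det (Matrix.of fun i j : Fin (m + 1) =>
      (if i = j then 1 else 0) - (if (i : ℕ) ≡ j + 1 [MOD m + 1] then y else 0)) =
      1 - y ^ (m + 1) := by
  let A : Matrix (Fin (m + 1)) (Fin (m + 1)) R := fun i j =>
    (if i = j then 1 else 0) - (if j = Fin.last m then y ^ ((i : ℕ) + 1) else 0)
  rw [← Matrix.det_eq_of_forall_row_eq_smul_add_pred (A := A) (fun _ => y)]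
  · rw [Matrix.det_of_isUpperTriangular]
    · rw [Fin.prod_univ_castSucc]
      simp [A, (Fin.castSucc_lt_last _).ne]
    · intro i j hij
      have hij : j < i := hij
      simp [A, hij.ne', (hij.trans_le (Fin.le_last i)).ne]
  · intro j
    have : ((0 : ℕ) ≡ j + 1 [MOD m + 1]) ↔ j = Fin.last m := by
      rw [Nat.ModEq.comm, Nat.modEq_zero_iff_dvd, Fin.ext_iff, Fin.val_last]
      constructor
      · intro h
        have := Nat.le_of_dvd (by omega) h
        omega
      · intro h
        rw [h]
    simp [A, this]
  · intro i j
    have : ((i : ℕ) + 1 ≡ j + 1 [MOD m + 1]) ↔ i.castSucc = j := by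
      rw [Fin.ext_iff, Fin.val_castSucc]
      constructor
      · intro h
        exact (Nat.ModEq.add_right_cancel' 1 h).eq_of_lt_of_lt (by omega) j.2
      · intro h
        rw [h]
    simp only [A, Matrix.of_apply, Fin.val_succ, this, Fin.val_castSucc]
    split_ifs <;> ring

theorem groupDet_one_sub_single (c : G) (y : R) :
    groupDet (1 - MonoidAlgebra.single c y).coeff =
      (1 - y ^ orderOf c) ^ (Fintype.card G / orderOf c) := by
  classical
  rw [groupDet_eq_pow_of_injective (Subgroup.zpowers c).subtype Subtype.val_injective,
    Fintype.card_zpowers]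
  · congr 1
    have hc := isOfFinOrder_of_finite c
    rw [groupDet, ← Matrix.det_submatrix_equiv_self (finEquivZPowers hc)]
    obtain ⟨m, hm⟩ := Nat.exists_eq_succ_of_ne_zero (orderOf_pos c).ne'
    have key : ∀ i j : Fin (orderOf c),
        (1 - MonoidAlgebra.single c y : MonoidAlgebra R G).coeff ((c ^ (j : ℕ))⁻¹ * c ^ (i : ℕ)) =
        (if i = j then 1 else 0) - (if (i : ℕ) ≡ j + 1 [MOD orderOf c] then y else 0) := by
      intro i j
      have h1 : 1 = (c ^ (j : ℕ))⁻¹ * c ^ (i : ℕ) ↔ i = j := by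
        rw [eq_comm, inv_mul_eq_one, pow_inj_mod, Nat.mod_eq_of_lt i.2, Nat.mod_eq_of_lt j.2,
          Fin.ext_iff, eq_comm]
      have h2 : c = (c ^ (j : ℕ))⁻¹ * c ^ (i : ℕ) ↔ (i : ℕ) ≡ j + 1 [MOD orderOf c] := by
        rw [eq_inv_mul_iff_mul_eq, ← pow_succ, pow_eq_pow_iff_modEq, Nat.ModEq.comm]
      simp [MonoidAlgebra.one_def, MonoidAlgebra.coeff_single, Finsupp.single_apply, h1, h2]
    trans Matrix.det (Matrix.of fun i j : Fin (orderOf c) =>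
        (if i = j then 1 else 0) - (if (i : ℕ) ≡ j + 1 [MOD orderOf c] then y else 0))
    · congr 1
      ext i j
      exact key i j
    · rw [hm]
      exact det_one_sub_cyclic_shift m y
  · intro g hg
    have h1 : 1 ≠ g := by rintro rfl; exact hg (one_mem _)
    have h2 : c ≠ g := by
      rintro rfl
      exact hg ⟨⟨c, Subgroup.mem_zpowers c⟩, rfl⟩
    simp [MonoidAlgebra.one_def, MonoidAlgebra.coeff_single, h1, h2]

end GroupDet

section Cycles

/-- The embedding `Perm (Fin n) → Perm (Fin (n + 1))` with image the stabilizer of `0`. -/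
def permSuccHom (n : ℕ) : Equiv.Perm (Fin n) →* Equiv.Perm (Fin (n + 1)) where
  toFun w := Equiv.Perm.decomposeFin.symm (0, w)
  map_one' := by ext i; cases i using Fin.cases <;> simp
  map_mul' v w := by ext i; cases i using Fin.cases <;> simp

@[simp]
theorem permSuccHom_apply_zero {n : ℕ} (w : Equiv.Perm (Fin n)) : permSuccHom n w 0 = 0 := by
  simp [permSuccHom]

@[simp]
theorem permSuccHom_apply_succ {n : ℕ} (w : Equiv.Perm (Fin n)) (i : Fin n) :
    permSuccHom n w i.succ = (w i).succ := by
  simp [permSuccHom]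

theorem permSuccHom_injective (n : ℕ) : Function.Injective (permSuccHom n) := by
  intro v w h
  ext i
  simpa [Fin.ext_iff] using congrArg (fun g => g i.succ) h

/-- The cycle `0 ↦ p ↦ p - 1 ↦ ⋯ ↦ 0`, with `p` read modulo `n + 1`. -/
def lowerCycle (n p : ℕ) : Equiv.Perm (Fin (n + 1)) :=
  (Fin.ofNat (n + 1) p).cycleRange⁻¹

theorem lowerCycle_val_apply_zero {n : ℕ} (p : Fin (n + 1)) : lowerCycle n p 0 = p := by
  simp [lowerCycle]

theorem lowerCycle_val_apply_succ {n : ℕ} (p : Fin (n + 1)) (i : Fin n) :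
    lowerCycle n p i.succ = p.succAbove i := by
  simp [lowerCycle]

theorem val_lowerCycle_apply {n p : ℕ} (hp : p ≤ n) (i : Fin (n + 1)) :
    (lowerCycle n p i : ℕ) = if (i : ℕ) = 0 then p else if (i : ℕ) ≤ p then i - 1 else i := by
  lift p to Fin (n + 1) using by omega
  cases i using Fin.cases with
  | zero => simp [lowerCycle_val_apply_zero]
  | succ i =>
    rw [lowerCycle_val_apply_succ, Fin.succAbove]
    simp only [Fin.lt_def, Fin.val_castSucc, Fin.val_succ]
    split_ifs <;> simp only [Fin.val_castSucc, Fin.val_succ] at * <;> omega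

theorem orderOf_lowerCycle {n p : ℕ} (hp : p ≤ n) : orderOf (lowerCycle n p) = p + 1 := by
  lift p to Fin (n + 1) using by omega
  rw [lowerCycle, orderOf_inv, Fin.ofNat_eq_cast, Fin.cast_val_eq_self]
  by_cases h : p = 0
  · simp [h]
  · rw [← Equiv.Perm.lcm_cycleType, Fin.cycleType_cycleRange h]
    simp

theorem lowerCycle_mul_lowerCycle_succ {n p k : ℕ} (hk : k < p) (hp : p ≤ n) :
    lowerCycle n p * lowerCycle n (k + 1) = lowerCycle n k * lowerCycle n p * lowerCycle n 1 := by
  ext i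
  simp only [Equiv.Perm.mul_apply, val_lowerCycle_apply hp,
    val_lowerCycle_apply (show k + 1 ≤ n by omega), val_lowerCycle_apply (show k ≤ n by omega),
    val_lowerCycle_apply (show 1 ≤ n by omega)]
  split_ifs <;> omega

theorem lowerCycle_succ_mul_lowerCycle_one {n p : ℕ} (hp : p ≤ n) :
    lowerCycle (n + 1) (p + 1) * lowerCycle (n + 1) 1 = permSuccHom (n + 1) (lowerCycle n p) := by
  ext i
  rw [Equiv.Perm.mul_apply, val_lowerCycle_apply (by omega),
    val_lowerCycle_apply (show 1 ≤ n + 1 by omega)]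
  cases i using Fin.cases with
  | zero => simp
  | succ i =>
    rw [permSuccHom_apply_succ, Fin.val_succ, Fin.val_succ, val_lowerCycle_apply hp]
    split_ifs <;> first | contradiction | omega

theorem orderOf_lowerCycle_succ_mul_lowerCycle_one {n p : ℕ} (hp : p < n) :
    orderOf (lowerCycle n (p + 1) * lowerCycle n 1) = p + 1 := by
  obtain ⟨n, rfl⟩ : ∃ m, n = m + 1 := ⟨n - 1, by omega⟩
  rw [lowerCycle_succ_mul_lowerCycle_one (by omega),
    orderOf_injective _ (permSuccHom_injective _), orderOf_lowerCycle (by omega)]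

end Cycles

theorem one_sub_mul_sum_range {A : Type*} [Ring A] (x : ℕ → A) (p : ℕ) (h0 : x 0 = 1)
    (h : ∀ k ≤ p, x (p + 1) * x (k + 1) = x k * (x (p + 1) * x 1)) :
    (1 - x (p + 1)) * ∑ k ∈ Finset.range (p + 2), x k =
      (∑ k ∈ Finset.range (p + 1), x k) * (1 - x (p + 1) * x 1) := by
  have hx : x (p + 1) * ∑ k ∈ Finset.range (p + 2), x k =
      (∑ k ∈ Finset.range (p + 1), x k) * (x (p + 1) * x 1) + x (p + 1) := by
    rw [Finset.sum_range_succ', h0, mul_add, mul_one, Finset.mul_sum, Finset.sum_mul]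
    congr 1
    exact Finset.sum_congr rfl fun k hk => h k (by simpa [Nat.lt_succ_iff] using hk)
  rw [sub_mul, one_mul, hx, Finset.sum_range_succ, mul_sub, mul_one]
  abel

section Factorization

open Polynomial

theorem div_eq_div_succ_add_div_mul {N m : ℕ} (hm : 0 < m) (h : m * (m + 1) ∣ N) :
    N / m = N / (m + 1) + N / ((m + 1) * m) := by
  obtain ⟨c, rfl⟩ := h
  have h1 : m * (m + 1) * c / m = (m + 1) * c := by
    rw [mul_assoc, Nat.mul_div_cancel_left _ hm]
  have h2 : m * (m + 1) * c / (m + 1) = m * c := by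
    rw [mul_comm m, mul_assoc, Nat.mul_div_cancel_left _ m.succ_pos]
  have h3 : m * (m + 1) * c / ((m + 1) * m) = c := by
    rw [mul_comm m, Nat.mul_div_cancel_left _ (by positivity)]
  rw [h1, h2, h3]
  ring

/-- The cycle `lowerCycle n p` in the group algebra, weighted by `X` to its inversion number. -/
noncomputable def weightedCycle (n p : ℕ) : MonoidAlgebra ℤ[X] (Equiv.Perm (Fin (n + 1))) :=
  MonoidAlgebra.single (lowerCycle n p) (X ^ p)

theorem weightedCycle_zero (n : ℕ) : weightedCycle n 0 = 1 := by
  simp [weightedCycle, lowerCycle, MonoidAlgebra.one_def]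

theorem groupDet_sum_weightedCycle {n p : ℕ} (hp : p ≤ n) :
    groupDet (∑ k ∈ Finset.range (p + 1), weightedCycle n k).coeff =
      ∏ k ∈ Finset.Icc 2 (p + 1),
        (1 - X ^ (k * (k - 1)) : ℤ[X]) ^ ((n + 1).factorial / (k * (k - 1))) := by
  induction p with
  | zero =>
    simpa [weightedCycle_zero] using
      groupDet_one_sub_single (1 : Equiv.Perm (Fin (n + 1))) (0 : ℤ[X])
  | succ p ih =>
    have h := congrArg (fun a => groupDet a.coeff)
      (one_sub_mul_sum_range (weightedCycle n) p (weightedCycle_zero n) fun k hk => by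
        simp only [weightedCycle, MonoidAlgebra.single_mul_single]
        rw [lowerCycle_mul_lowerCycle_succ (by omega) hp, mul_assoc]
        congr 1
        ring)
    have hdvd : (p + 1) * (p + 1 + 1) ∣ (n + 1).factorial := by
      refine dvd_trans ?_ (Nat.factorial_dvd_factorial (show p + 2 ≤ n + 1 by omega))
      rw [Nat.factorial_succ, Nat.factorial_succ, ← mul_assoc, mul_comm (p + 1)]
      exact dvd_mul_right _ _
    simp only [groupDet_coeff_mul] at h
    rw [ih (by omega)] at h
    simp only [weightedCycle, MonoidAlgebra.single_mul_single] at h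
    rw [groupDet_one_sub_single, groupDet_one_sub_single, orderOf_lowerCycle hp,
      orderOf_lowerCycle_succ_mul_lowerCycle_one (by omega), ← pow_add, ← pow_mul, ← pow_mul,
      Fintype.card_perm, Fintype.card_fin, div_eq_div_succ_add_div_mul p.succ_pos hdvd,
      mul_comm (p + 1) (p + 1 + 1), pow_add, mul_left_comm] at h
    have h' := mul_left_cancel₀ (pow_ne_zero _ (one_sub_X_pow_ne_zero (by positivity))) h
    rw [Finset.prod_Icc_succ_top (by omega)]
    exact h'

theorem inv_count_eq_sum {n : ℕ} (g : Equiv.Perm (Fin n)) :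
    inv_count g 1 = ∑ i, ∑ j, if i < j ∧ g j < g i then 1 else 0 := by
  rw [inv_count, Finset.card_filter, Fintype.sum_prod_type]
  rfl

theorem inv_count_lowerCycle_mul {n : ℕ} (p : Fin (n + 1)) (w : Equiv.Perm (Fin n)) :
    inv_count (lowerCycle n p * permSuccHom n w) 1 = p + inv_count w 1 := by
  have hp : (Finset.univ.filter fun j => p.succAbove (w j) < p).card = p := by
    rw [Finset.card_filter, Equiv.sum_comp w fun j => if p.succAbove j < p then 1 else 0]
    simp only [Fin.succAbove_lt_iff_castSucc_lt]
    simp only [Fin.lt_def, Fin.val_castSucc]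
    rw [Fin.sum_univ_eq_sum_range (fun j => if j < (p : ℕ) then 1 else 0), ← Finset.card_filter]
    have : (Finset.range n).filter (· < (p : ℕ)) = Finset.range p := by
      ext j
      simp
      omega
    rw [this, Finset.card_range]
  simp [inv_count_eq_sum, Fin.sum_univ_succ, lowerCycle_val_apply_zero,
    lowerCycle_val_apply_succ, hp]

theorem bijective_lowerCycle_mul (n : ℕ) :
    Function.Bijective fun x : Fin (n + 1) × Equiv.Perm (Fin n) =>
      lowerCycle n x.1 * permSuccHom n x.2 := by
  rw [Fintype.bijective_iff_injective_and_card]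
  constructor
  · rintro ⟨p, v⟩ ⟨p', w⟩ h
    have hp : p = p' := by
      simpa [lowerCycle_val_apply_zero] using congrArg (fun g => g 0) h
    subst hp
    simpa [(permSuccHom_injective n).eq_iff] using h
  · simp [Fintype.card_perm, Nat.factorial_succ]

theorem groupDet_inv_count_succ (n : ℕ) :
    groupDet (fun g : Equiv.Perm (Fin (n + 1)) => (X : ℤ[X]) ^ inv_count g 1) =
      (∏ k ∈ Finset.Icc 2 (n + 1),
        (1 - X ^ (k * (k - 1)) : ℤ[X]) ^ ((n + 1).factorial / (k * (k - 1)))) *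
      groupDet (fun g : Equiv.Perm (Fin n) => (X : ℤ[X]) ^ inv_count g 1) ^ (n + 1) := by
  classical
  let a : MonoidAlgebra ℤ[X] (Equiv.Perm (Fin (n + 1))) :=
    ∑ w : Equiv.Perm (Fin n), MonoidAlgebra.single (permSuccHom n w) (X ^ inv_count w 1)
  have ha : (∑ k ∈ Finset.range (n + 1), weightedCycle n k) * a =
      ∑ g, MonoidAlgebra.single g (X ^ inv_count g 1) := by
    rw [← Fin.sum_univ_eq_sum_range, Finset.sum_mul_sum, ← Fintype.sum_prod_type',
      ← (bijective_lowerCycle_mul n).sum_comp]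
    refine Finset.sum_congr rfl fun x _ => ?_
    rw [weightedCycle, MonoidAlgebra.single_mul_single, inv_count_lowerCycle_mul, pow_add]
  have hcoeff : (fun g : Equiv.Perm (Fin (n + 1)) => (X : ℤ[X]) ^ inv_count g 1) =
      (∑ g, MonoidAlgebra.single g ((X : ℤ[X]) ^ inv_count g 1)).coeff := by
    ext1 g
    simp [MonoidAlgebra.coeff_sum, MonoidAlgebra.coeff_single, Finsupp.single_apply]
  rw [hcoeff, ← ha, groupDet_coeff_mul, groupDet_sum_weightedCycle le_rfl,
    groupDet_eq_pow_of_injective (permSuccHom n) (permSuccHom_injective n) a.coeff]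
  · congr 2
    · congr 1
      ext1 w
      simp [a, MonoidAlgebra.coeff_sum, MonoidAlgebra.coeff_single, Finsupp.single_apply,
        (permSuccHom_injective n).eq_iff]
    · rw [Fintype.card_perm, Fintype.card_perm, Fintype.card_fin, Fintype.card_fin,
        Nat.factorial_succ, Nat.mul_div_cancel _ n.factorial_pos]
  · intro g hg
    have : ∀ w, permSuccHom n w ≠ g := fun w hw => hg (MonoidHom.mem_range.2 ⟨w, hw⟩)
    simp [a, MonoidAlgebra.coeff_sum, MonoidAlgebra.coeff_single, this]

theorem choose_mul_factorial_succ {n k : ℕ} (hk : 2 ≤ k) (hkn : k ≤ n + 1) :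
    (n + 1).choose k * (k - 2).factorial * (n + 1 - k + 1).factorial =
      (n + 1).factorial / (k * (k - 1)) +
        n.choose k * (k - 2).factorial * (n - k + 1).factorial * (n + 1) := by
  obtain ⟨k, rfl⟩ := Nat.exists_eq_add_of_le' hk
  have hkk : (k + 2).factorial = (k + 2) * (k + 1) * k.factorial := by
    rw [Nat.factorial_succ, Nat.factorial_succ, mul_assoc]
  obtain ⟨d, hd⟩ := Nat.exists_eq_add_of_le' hkn
  have h1 := Nat.choose_mul_factorial_mul_factorial hkn
  rw [show n + 1 - (k + 2) = d by omega, hkk] at h1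
  have h2 : (n + 1).factorial / ((k + 2) * (k + 1)) =
      (n + 1).choose (k + 2) * k.factorial * d.factorial := by
    rw [← h1]
    exact Nat.div_eq_of_eq_mul_right (by positivity) (by ring)
  rw [show k + 2 - 1 = k + 1 by omega, h2, show k + 2 - 2 = k by omega,
    show n + 1 - (k + 2) = d by omega, Nat.factorial_succ]
  cases d with
  | zero =>
    rw [Nat.choose_eq_zero_of_lt (show n < k + 2 by omega)]
    simp
  | succ d =>
    have h3 : (n + 1).choose (k + 2) * (d + 1) = n.choose (k + 2) * (n + 1) := by
      have := Nat.choose_mul_succ_eq n (k + 2)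
      rw [show n + 1 - (k + 2) = d + 1 by omega] at this
      exact this.symm
    rw [show n - (k + 2) + 1 = d + 1 by omega]
    linear_combination (k.factorial * (d + 1).factorial) * h3

theorem groupDet_inv_count (n : ℕ) :
    groupDet (fun g : Equiv.Perm (Fin n) => (X : ℤ[X]) ^ inv_count g 1) =
      ∏ k ∈ Finset.Icc 2 n, (1 - X ^ (k * (k - 1)) : ℤ[X])
        ^ (n.choose k * (k - 2).factorial * (n - k + 1).factorial) := by
  induction n with
  | zero => simp [groupDet, inv_count]
  | succ n ih =>
    have h : (∏ k ∈ Finset.Icc 2 n, (1 - X ^ (k * (k - 1)) : ℤ[X])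
          ^ (n.choose k * (k - 2).factorial * (n - k + 1).factorial)) =
        ∏ k ∈ Finset.Icc 2 (n + 1), (1 - X ^ (k * (k - 1)) : ℤ[X])
          ^ (n.choose k * (k - 2).factorial * (n - k + 1).factorial) := by
      refine Finset.prod_subset (Finset.Icc_subset_Icc_right n.le_succ) fun k _ hk' => ?_
      rw [Nat.choose_eq_zero_of_lt (by simp_all)]
      simp
    rw [groupDet_inv_count_succ, ih, h, ← Finset.prod_pow, ← Finset.prod_mul_distrib]
    refine Finset.prod_congr rfl fun k hk => ?_
    rw [Finset.mem_Icc] at hk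
    rw [choose_mul_factorial_succ hk.1 hk.2, pow_add _ (_ / _), pow_mul _ (_ * _) (n + 1)]

end Factorization

theorem det_q_inversion_matrix (n : ℕ) (hn : 2 ≤ n) :
    Matrix.det (Matrix.of fun σ τ : Equiv.Perm (Fin n) =>
        (Polynomial.X : Polynomial ℤ) ^ inv_count σ τ) =
      ∏ k ∈ Finset.Icc 2 n,
        (1 - (Polynomial.X : Polynomial ℤ) ^ (k * (k - 1)))
          ^ (n.choose k * (k - 2).factorial * (n - k + 1).factorial) :=
  groupDet_inv_count n
end

section
/- Let n be a positive integer, λ = (p_1,…,p_k) a partition of n, f : {1,…,n} → {1,…,k} the map with f(s) = i exactly when p_1+⋯+p_{i−1} < s ≤ p_1+⋯+p_i, and G = {φ ∈ S_n : f∘φ = f}. Let σ, τ ∈ S_n, and write σ̇ = f∘σ and τ̇ = f∘τ (words of length n in the alphabet {1,…,k}). Then in the multiparametric quon algebra A: a_{σ̇(n)}⋯a_{σ̇(1)} · a†_{τ̇(1)}⋯a†_{τ̇(n)} − c·1 belongs to L + Rt, where c = Σ_{φ ∈ G} ∏ q_{f(σ(s)),f(σ(t))}, the inner product over pairs (s,t)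 with 1 ≤ s < t ≤ n and τ⁻¹(φ(σ(s))) > τ⁻¹(φ(σ(t))). (Equivalently, ⟨0| a_{σ̇(n)}⋯a_{σ̇(1)} a†_{τ̇(1)}⋯a†_{τ̇(n)} |0⟩ = c, and in particular this value does not depend on the chosen representative τ of τ̇.) -/
/-- The coefficient ring `R = ℂ[q_{i,j} : i,j ∈ ℕ⁺]`. -/
abbrev QR : Type := MvPolynomial (ℕ+ × ℕ+) ℂ

/-- The quon relations `a_i a_j† = q_{i,j} a_j† a_i + δ_{i,j}` on the free
`R`-algebra on the symbols `a_i` (`Sum.inl i`) and `a_i†` (`Sum.inr i`). -/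
inductive QuonRel : FreeAlgebra QR (ℕ+ ⊕ ℕ+) → FreeAlgebra QR (ℕ+ ⊕ ℕ+) → Prop
  | rel (i j : ℕ+) : QuonRel
      (FreeAlgebra.ι QR (Sum.inl i) * FreeAlgebra.ι QR (Sum.inr j))
      ((MvPolynomial.X (i, j) : QR) •
          (FreeAlgebra.ι QR (Sum.inr j) * FreeAlgebra.ι QR (Sum.inl i))
        + if i = j then 1 else 0)

/-- The multiparametric quon algebra `A`. -/
abbrev QuonAlg : Type := RingQuot QuonRel

/-- The annihilation operator `a_i`. -/
noncomputable def ann (i : ℕ+) : QuonAlg :=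
  RingQuot.mkAlgHom QR QuonRel (FreeAlgebra.ι QR (Sum.inl i))

/-- The creation operator `a_i†`. -/
noncomputable def cre (i : ℕ+) : QuonAlg :=
  RingQuot.mkAlgHom QR QuonRel (FreeAlgebra.ι QR (Sum.inr i))

/-- The left ideal `L = Σ_i A·a_i`, as an `R`-submodule of `A`. -/
noncomputable def leftIdeal : Submodule QR QuonAlg :=
  Submodule.span QR {x : QuonAlg | ∃ y : QuonAlg, ∃ i : ℕ+, x = y * ann i}

/-- The right ideal `Rt = Σ_j a_j†·A`, as an `R`-submodule of `A`. -/
noncomputable def rightIdeal : Submodule QR QuonAlg :=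
  Submodule.span QR {x : QuonAlg | ∃ y : QuonAlg, ∃ j : ℕ+, x = cre j * y}

/-- The Young subgroup `G = {φ ∈ S_n : f ∘ φ = f}` (as a finset). -/
def youngG {n k : ℕ} (f : Fin n → Fin k) : Finset (Equiv.Perm (Fin n)) :=
  Finset.univ.filter fun φ => f ∘ ⇑φ = f

theorem ann_mul_cre (i j : ℕ+) :
    ann i * cre j = (MvPolynomial.X (i, j) : QR) • (cre j * ann i) + if i = j then 1 else 0 := by
  have h := RingQuot.mkAlgHom_rel QR (QuonRel.rel i j)
  rw [map_add, map_smul, map_mul, map_mul] at h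
  rw [ann, cre, h]
  split_ifs <;> simp

/-- Moving an annihilation operator to the right through a product of creation operators. -/
theorem exists_ann_mul_prod_cre (i : ℕ+) (n : ℕ) (v : Fin (n + 1) → ℕ+) :
    ∃ y : QuonAlg, ann i * (List.ofFn fun u => cre (v u)).prod =
      (∑ j, (if v j = i then
          ∏ l, if l < j then (MvPolynomial.X (i, v l) : QR) else 1 else 0) •
        (List.ofFn fun u => cre (v (j.succAbove u))).prod) + y * ann i := by
  induction n with
  | zero =>
    refine ⟨(MvPolynomial.X (i, v 0) : QR) • cre (v 0), ?_⟩
    simp [ann_mul_cre, eq_comm, add_comm]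
  | succ n ih =>
    obtain ⟨y, hy⟩ := ih fun u => v u.succ
    refine ⟨(MvPolynomial.X (i, v 0) : QR) • (cre (v 0) * y), ?_⟩
    rw [List.ofFn_succ, List.prod_cons, ← mul_assoc, ann_mul_cre, add_mul, smul_mul_assoc,
      mul_assoc, hy, mul_add, smul_add, Finset.mul_sum, Finset.smul_sum, add_comm, ← add_assoc]
    have h0 : (if i = v 0 then (1 : QuonAlg) else 0) * (List.ofFn fun u => cre (v u.succ)).prod =
        (if v 0 = i then
          ∏ l, if l < 0 then (MvPolynomial.X (i, v l) : QR) else 1 else 0) •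
        (List.ofFn fun u => cre (v ((0 : Fin (n + 2)).succAbove u))).prod := by
      simp [eq_comm]
    rw [h0]
    congr 1
    · rw [Fin.sum_univ_succ (n := n + 1)]
      congr 1
      refine Finset.sum_congr rfl fun j _ => ?_
      rw [List.ofFn_succ (f := fun u => cre (v (j.succ.succAbove u))), List.prod_cons,
        mul_smul_comm, smul_smul, Fin.prod_univ_succ (n := n + 1)]
      simp
    · rw [smul_mul_assoc, mul_assoc]

/-- The permutation of `Fin (n + 1)` sending `0` to `j` and acting on the remaining
elements as `π`. -/
def permCons {n : ℕ} (j : Fin (n + 1)) (π : Equiv.Perm (Fin n)) : Equiv.Perm (Fin (n + 1)) :=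
  ((finSuccEquiv' 0).trans (Equiv.optionCongr π)).trans (finSuccEquiv' j).symm

@[simp] theorem permCons_zero {n : ℕ} (j : Fin (n + 1)) (π : Equiv.Perm (Fin n)) :
    permCons j π 0 = j := by
  simp [permCons]

@[simp] theorem permCons_succ {n : ℕ} (j : Fin (n + 1)) (π : Equiv.Perm (Fin n)) (s : Fin n) :
    permCons j π s.succ = j.succAbove (π s) := by
  simp only [permCons, Equiv.trans_apply, ← Fin.succAbove_zero, finSuccEquiv'_succAbove,
    Equiv.optionCongr_apply, Option.map_some, finSuccEquiv'_symm_some]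

theorem permCons_bijective (n : ℕ) :
    Function.Bijective fun x : Fin (n + 1) × Equiv.Perm (Fin n) => permCons x.1 x.2 := by
  rw [Fintype.bijective_iff_injective_and_card]
  refine ⟨?_, by simp [Fintype.card_perm, Nat.factorial_succ]⟩
  rintro ⟨j, π⟩ ⟨j', π'⟩ h
  have h : permCons j π = permCons j' π' := h
  obtain rfl : j = j' := by simpa using DFunLike.congr_fun h 0
  have : π = π' := by
    ext s : 1
    simpa using DFunLike.congr_fun h s.succ
  rw [this]

/-- The monomial attached to the inversions of `π`, with letters read from `w`. -/
noncomputable def inversionWeight {n : ℕ} (w : Fin n → ℕ+) (π : Equiv.Perm (Fin n)) : QR :=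
  ∏ q ∈ Finset.univ.filter (fun q : Fin n × Fin n => q.1 < q.2 ∧ π q.2 < π q.1),
    MvPolynomial.X (w q.1, w q.2)

/-- The sum of the inversion weights of the permutations `π` matching the word `w` with `v`. -/
noncomputable def matchingSum {n : ℕ} (w v : Fin n → ℕ+) : QR :=
  ∑ π : Equiv.Perm (Fin n), if v ∘ π = w then inversionWeight w π else 0

theorem inversionWeight_permCons {n : ℕ} (w v : Fin (n + 1) → ℕ+) (j : Fin (n + 1))
    (π : Equiv.Perm (Fin n)) (h : ∀ s : Fin n, v (j.succAbove (π s)) = w s.succ) :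
    inversionWeight w (permCons j π) =
      (∏ l, if l < j then (MvPolynomial.X (w 0, v l) : QR) else 1) *
        inversionWeight (fun s => w s.succ) π := by
  have key : (∏ s : Fin n, if j.succAbove (π s) < j then
      (MvPolynomial.X (w 0, w s.succ) : QR) else 1) =
      ∏ l, if l < j then (MvPolynomial.X (w 0, v l) : QR) else 1 := by
    rw [Fin.prod_univ_succAbove _ j, ← Equiv.prod_comp π (fun s => if j.succAbove s < j then
      (MvPolynomial.X (w 0, v (j.succAbove s)) : QR) else 1)]
    simp [h]
  rw [← key]
  simp only [inversionWeight, Finset.prod_filter, Fintype.prod_prod_type, Fin.prod_univ_succ]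
  simp [Fin.succAbove_lt_succAbove_iff]

theorem matchingSum_succ {n : ℕ} (w v : Fin (n + 1) → ℕ+) :
    matchingSum w v = ∑ j, (if v j = w 0 then
        ∏ l, if l < j then (MvPolynomial.X (w 0, v l) : QR) else 1 else 0) *
      matchingSum (fun s => w s.succ) (fun u => v (j.succAbove u)) := by
  rw [matchingSum, ← (permCons_bijective n).sum_comp, Fintype.sum_prod_type]
  refine Finset.sum_congr rfl fun j _ => ?_
  rw [matchingSum, Finset.mul_sum]
  refine Finset.sum_congr rfl fun π _ => ?_
  have hiff : v ∘ permCons j π = w ↔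
      v j = w 0 ∧ (fun u => v (j.succAbove u)) ∘ π = fun s => w s.succ := by
    simp [funext_iff, Fin.forall_fin_succ]
  by_cases h0 : v j = w 0
  · by_cases h1 : (fun u => v (j.succAbove u)) ∘ π = fun s => w s.succ
    · rw [if_pos (hiff.2 ⟨h0, h1⟩), if_pos h0, if_pos h1,
        inversionWeight_permCons w v j π (congrFun h1)]
    · rw [if_neg fun h => h1 (hiff.1 h).2, if_neg h1, mul_zero]
  · rw [if_neg fun h => h0 (hiff.1 h).1, if_neg h0, zero_mul]

/-- The vacuum expectation of a product of annihilation and creation operators of equal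
length, modulo `leftIdeal ⊔ rightIdeal`. -/
theorem exists_prod_ann_mul_prod_cre_eq (n : ℕ) (w v : Fin n → ℕ+) :
    ∃ z ∈ leftIdeal ⊔ rightIdeal,
      (List.ofFn fun u => ann (w u)).reverse.prod * (List.ofFn fun u => cre (v u)).prod =
        matchingSum w v • (1 : QuonAlg) + z := by
  induction n with
  | zero =>
    have h : matchingSum w v = 1 := by
      simp [matchingSum, inversionWeight, Subsingleton.elim (v ∘ _) w]
    exact ⟨0, zero_mem _, by simp [h]⟩
  | succ n ih =>
    obtain ⟨y, hy⟩ := exists_ann_mul_prod_cre (w 0) n v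
    choose z hz hzeq using fun j : Fin (n + 1) =>
      ih (fun s => w s.succ) (fun u => v (j.succAbove u))
    refine ⟨(∑ j, (if v j = w 0 then
        ∏ l, if l < j then (MvPolynomial.X (w 0, v l) : QR) else 1 else 0) • z j) +
        (List.ofFn fun u : Fin n => ann (w u.succ)).reverse.prod * y * ann (w 0),
      add_mem (Submodule.sum_mem _ fun j _ => Submodule.smul_mem _ _ (hz j))
        (Submodule.mem_sup_left (Submodule.subset_span ⟨_, w 0, rfl⟩)), ?_⟩
    rw [List.ofFn_succ, List.reverse_cons, List.prod_append, List.prod_singleton, mul_assoc, hy,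
      matchingSum_succ, mul_add, Finset.mul_sum, Finset.sum_smul, ← add_assoc,
      ← Finset.sum_add_distrib, mul_assoc]
    congr 1
    refine Finset.sum_congr rfl fun j _ => ?_
    rw [mul_smul_comm, mul_smul, ← smul_add, hzeq]

/-- For a partition `λ = (p_1,…,p_k)` of `n` with associated block map
`f : {1,…,n} → {1,…,k}` and Young subgroup `G`, and `σ, τ ∈ S_n`:
`⟨0| a_{σ̇(n)}⋯a_{σ̇(1)} a†_{τ̇(1)}⋯a†_{τ̇(n)} |0⟩
  = Σ_{φ∈G} ∏_{s<t, τ⁻¹(φσ(s)) > τ⁻¹(φσ(t))} q_{f(σ(s)),f(σ(t))}`,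
where `σ̇ = f∘σ`, `τ̇ = f∘τ`, and the element `a ∈ {1,…,k}` is identified with
the positive integer `a`. -/
theorem braket_multiset_eq (n k : ℕ) (hn : 0 < n)
    (p : Fin k → ℕ) (hpos : ∀ i, 0 < p i)
    (hmono : ∀ i j : Fin k, i ≤ j → p j ≤ p i) (hsum : ∑ i, p i = n)
    (f : Fin n → Fin k)
    (hf : ∀ (s : Fin n) (i : Fin k),
      f s = i ↔ ∑ j ∈ Finset.Iio i, p j ≤ (s : ℕ) ∧
        (s : ℕ) < ∑ j ∈ Finset.Iic i, p j)
    (σ τ : Equiv.Perm (Fin n)) :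
    (List.ofFn fun u : Fin n => ann ((f (σ u) : ℕ).succPNat)).reverse.prod *
        (List.ofFn fun u : Fin n => cre ((f (τ u) : ℕ).succPNat)).prod
      - (∑ φ ∈ youngG f,
          ∏ q ∈ Finset.univ.filter
              (fun q : Fin n × Fin n =>
                q.1 < q.2 ∧ τ⁻¹ (φ (σ q.2)) < τ⁻¹ (φ (σ q.1))),
            (MvPolynomial.X
              ((f (σ q.1) : ℕ).succPNat, (f (σ q.2) : ℕ).succPNat) : QR)) •
        (1 : QuonAlg)
      ∈ leftIdeal ⊔ rightIdeal := by
  obtain ⟨z, hz, h⟩ := exists_prod_ann_mul_prod_cre_eq n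
    (fun u => ((f (σ u) : ℕ).succPNat)) (fun u => ((f (τ u) : ℕ).succPNat))
  have hmatch : matchingSum (fun u => ((f (σ u) : ℕ).succPNat))
      (fun u => ((f (τ u) : ℕ).succPNat)) = ∑ φ ∈ youngG f,
        inversionWeight (fun u => ((f (σ u) : ℕ).succPNat)) (τ⁻¹ * φ * σ) := by
    rw [matchingSum, youngG, Finset.sum_filter,
      ← Equiv.sum_comp ((Equiv.mulLeft τ⁻¹).trans (Equiv.mulRight σ))]
    refine Finset.sum_congr rfl fun φ _ => if_congr ?_ rfl rfl
    simp only [funext_iff, Function.comp_apply, Equiv.trans_apply, Equiv.coe_mulLeft,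
      Equiv.coe_mulRight, Equiv.Perm.mul_apply, Equiv.Perm.coe_inv, Equiv.apply_symm_apply,
      Nat.succPNat_inj, Fin.val_inj]
    exact σ.forall_congr_right (q := fun x => f (φ x) = f x)
  rw [h, hmatch]
  have hcancel : ∀ x y : QuonAlg, x + y - x = y := fun x y => add_sub_cancel_left x y
  exact (congrArg (· ∈ leftIdeal ⊔ rightIdeal) (hcancel _ z)).mpr hz
end
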